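/- Boundary weak Harnack inequality in half-balls. For every integer n ≥ 2, reals 0 < λ ≤ Λ, exponents q > n and p with n ≤ p ≤ q, d₀ ∈ (0,1/4], and K > 0, there exist constants ε > 0, c > 0, C > 0 such that the following holds. Let b, f : B₂⁺ → ℝ be continuous with b ≥ 0 and ‖b‖_{L^q(B₂⁺)} ≤ K, and let u be a C² function on B₂⁺ with u ≥ 0 and L⁻[u] ≤ f in B₂⁺. Then c·(∫_{B_{3/2}⁺} (u(x)/x_n)^ε dx)^{1/ε} ≤ inf_{x ∈ B₁⁺} u(x)/x_n + C·‖f⁺‖_{L^{p,q}(B₂⁺)}, the integral being a Lebesgue integral with values in [0,+∞] (in particular it is finite whenever the right-hand side is). -/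

import Mathlib

open MeasureTheory
open scoped ENNReal

/-- The Pucci minimal extremal operator `𝓜⁻(M)` with ellipticity constants `lam ≤ Lam`:
the infimum of `tr(A*M)` over symmetric matrices `A` with `lam•I ≤ A ≤ Lam•I`. -/
noncomputable def pucciMinus (n : ℕ) (lam Lam : ℝ) (M : Matrix (Fin n) (Fin n) ℝ) : ℝ :=
  sInf { t : ℝ | ∃ A : Matrix (Fin n) (Fin n) ℝ, A.IsSymm ∧
    (A - lam • (1 : Matrix (Fin n) (Fin n) ℝ)).PosSemidef ∧
    (Lam • (1 : Matrix (Fin n) (Fin n) ℝ) - A).PosSemidef ∧ t = (A * M).trace }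

/-- The Pucci maximal extremal operator `𝓜⁺(M)`. -/
noncomputable def pucciPlus (n : ℕ) (lam Lam : ℝ) (M : Matrix (Fin n) (Fin n) ℝ) : ℝ :=
  sSup { t : ℝ | ∃ A : Matrix (Fin n) (Fin n) ℝ, A.IsSymm ∧
    (A - lam • (1 : Matrix (Fin n) (Fin n) ℝ)).PosSemidef ∧
    (Lam • (1 : Matrix (Fin n) (Fin n) ℝ) - A).PosSemidef ∧ t = (A * M).trace }

/-- The Hessian matrix `D²u(x)` of `u` at `x`. -/
noncomputable def hess (n : ℕ) (u : EuclideanSpace ℝ (Fin n) → ℝ)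
    (x : EuclideanSpace ℝ (Fin n)) : Matrix (Fin n) (Fin n) ℝ :=
  fun i j => fderiv ℝ (fun y => fderiv ℝ u y (EuclideanSpace.single j (1 : ℝ))) x
    (EuclideanSpace.single i (1 : ℝ))

/-- The euclidean norm `|Du(x)|` of the gradient of `u` at `x`. -/
noncomputable def gradNorm (n : ℕ) (u : EuclideanSpace ℝ (Fin n) → ℝ)
    (x : EuclideanSpace ℝ (Fin n)) : ℝ := ‖fderiv ℝ u x‖

/-- The `L^p` norm `(∫_E |g|^p)^(1/p)`, as a Lebesgue integral valued in `[0,∞]`. -/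
noncomputable def LpNormE (n : ℕ) (p : ℝ) (g : EuclideanSpace ℝ (Fin n) → ℝ)
    (E : Set (EuclideanSpace ℝ (Fin n))) : ℝ≥0∞ :=
  (∫⁻ x in E, ENNReal.ofReal (|g x| ^ p)) ^ (1 / p)

/-- The last (`n`-th) coordinate `x_n` of a point of `ℝⁿ`. -/
def lastC (n : ℕ) (hn : 1 ≤ n) (x : EuclideanSpace ℝ (Fin n)) : ℝ := x ⟨n - 1, by omega⟩

/-- The open half-ball `B_R⁺ = {|x| < R, x_n > 0}`. -/
def halfBall (n : ℕ) (hn : 1 ≤ n) (R : ℝ) : Set (EuclideanSpace ℝ (Fin n)) :=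
  {x | ‖x‖ < R ∧ 0 < lastC n hn x}

/-- The flat boundary part `B_R⁰ = {|x| ≤ R, x_n = 0}`. -/
def flatB (n : ℕ) (hn : 1 ≤ n) (R : ℝ) : Set (EuclideanSpace ℝ (Fin n)) :=
  {x | ‖x‖ ≤ R ∧ lastC n hn x = 0}

/-- The norm `‖g‖_{L^{p,q}(B_R⁺)} = ‖g‖_{L^p(B_R⁺)} + ‖g‖_{L^q(B_R⁺ ∩ {x_n < d0})}`. -/
noncomputable def LpqNormHB (n : ℕ) (hn : 1 ≤ n) (p q d0 R : ℝ)
    (g : EuclideanSpace ℝ (Fin n) → ℝ) : ℝ≥0∞ :=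
  LpNormE n p g (halfBall n hn R) +
    LpNormE n q g {x ∈ halfBall n hn R | lastC n hn x < d0}

/-- The open cube `Q_ρ` of side `ρ` centered at `(0,…,0,ρ/2)`. -/
def cubeQ (n : ℕ) (hn : 1 ≤ n) (ρ : ℝ) : Set (EuclideanSpace ℝ (Fin n)) :=
  {x | (∀ i : Fin n, i.1 ≠ n - 1 → |x i| < ρ / 2) ∧ 0 < lastC n hn x ∧ lastC n hn x < ρ}

/-- The norm `‖g‖_{L^{p,q}(Q₂)} = ‖g‖_{L^p(Q₂)} + ‖g‖_{L^q(Q₂ ∩ {x_n < d0})}`. -/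
noncomputable def LpqNormQ (n : ℕ) (hn : 1 ≤ n) (p q d0 : ℝ)
    (g : EuclideanSpace ℝ (Fin n) → ℝ) : ℝ≥0∞ :=
  LpNormE n p g (cubeQ n hn 2) +
    LpNormE n q g {x ∈ cubeQ n hn 2 | lastC n hn x < d0}

/-!
A nonnegative supersolution is compared from below with paraboloids: at a contact point its Hessian
is controlled by the equation, so the area formula for the gradient bounds the volume of the slopes,
and hence of the vertices, by that of the contact set. Combined with a radial barrier and a Vitali
covering this shows that a supersolution which is small at one point is small on most of a ball,
which gives the weak Harnack inequality on interior balls for a small exponent `ε`. Chains of balls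
whose radii are proportional to the height `x_n` then carry positivity through the half-ball with
polynomial loss in `x_n`.

Near the flat boundary the coefficients are small at small scales in the scale-invariant sense,
because `q > n`. Comparison with quadratic barriers at the scales `2⁻ᵐ` yields linear growth
`u ≥ a x_n` there, a Hopf lemma. Hence, if `u / x_n < J` somewhere in `B₁⁺`, the integral of
`(u / x_n)^ε` over a ball of radius proportional to `x_n` is at most a multiple of
`J^ε x_n^{-s} |B|`, where `s < 1` once `ε` is small. These balls cover `B_{3/2}⁺` and `x_n^{-s}` is
integrable.
-/

section PucciOperators

variable {n : ℕ} {lam Lam : ℝ} {A M N : Matrix (Fin n) (Fin n) ℝ}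

/-- The symmetric matrices `A` with `lam • I ≤ A ≤ Lam • I`, over which the infimum defining
`pucciMinus` is taken. -/
def ellipticMatrices (n : ℕ) (lam Lam : ℝ) : Set (Matrix (Fin n) (Fin n) ℝ) :=
  {A | A.IsSymm ∧ (A - lam • 1).PosSemidef ∧ (Lam • 1 - A).PosSemidef}

theorem smul_one_mem_ellipticMatrices (hLam : lam ≤ Lam) :
    lam • 1 ∈ ellipticMatrices n lam Lam := by
  refine ⟨by simp [Matrix.IsSymm], by simpa using Matrix.PosSemidef.zero, ?_⟩
  rw [← sub_smul]
  exact Matrix.PosSemidef.one.smul (sub_nonneg.2 hLam)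

theorem trace_mul_nonneg_of_posSemidef {ι : Type*} [Fintype ι] {P N : Matrix ι ι ℝ}
    (hP : P.PosSemidef) (hN : N.PosSemidef) : 0 ≤ (P * N).trace := by
  classical
  obtain ⟨B, rfl⟩ : ∃ B : Matrix ι ι ℝ, P = B.conjTranspose * B := by
    open scoped MatrixOrder in
    exact CStarAlgebra.nonneg_iff_eq_star_mul_self.mp hP.nonneg
  rw [Matrix.mul_assoc, Matrix.trace_mul_comm]
  exact (hN.mul_mul_conjTranspose_same B).trace_nonneg

theorem mul_trace_le_trace_mul (hA : A ∈ ellipticMatrices n lam Lam) (hN : N.PosSemidef) :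
    lam * N.trace ≤ (A * N).trace := by
  simpa [Matrix.sub_mul] using trace_mul_nonneg_of_posSemidef hA.2.1 hN

theorem trace_mul_le_mul_trace (hA : A ∈ ellipticMatrices n lam Lam) (hN : N.PosSemidef) :
    (A * N).trace ≤ Lam * N.trace := by
  simpa [Matrix.sub_mul] using trace_mul_nonneg_of_posSemidef hA.2.2 hN

theorem le_pucciMinus (hLam : lam ≤ Lam) {s : ℝ}
    (h : ∀ A ∈ ellipticMatrices n lam Lam, s ≤ (A * M).trace) : s ≤ pucciMinus n lam Lam M := by
  obtain ⟨h₁, h₂, h₃⟩ := smul_one_mem_ellipticMatrices (n := n) hLam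
  refine le_csInf ⟨_, _, h₁, h₂, h₃, rfl⟩ ?_
  rintro _ ⟨A, h₁, h₂, h₃, rfl⟩
  exact h A ⟨h₁, h₂, h₃⟩

open scoped MatrixOrder in
theorem pucciMinus_le_trace_mul (hA : A ∈ ellipticMatrices n lam Lam) (hM : M.IsHermitian) :
    pucciMinus n lam Lam M ≤ (A * M).trace := by
  refine csInf_le ⟨lam * M⁺.trace - Lam * M⁻.trace, ?_⟩ ⟨A, hA.1, hA.2.1, hA.2.2, rfl⟩
  rintro _ ⟨B, h₁, h₂, h₃, rfl⟩
  have hB : B ∈ ellipticMatrices n lam Lam := ⟨h₁, h₂, h₃⟩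
  have hpos : M⁺.PosSemidef := Matrix.nonneg_iff_posSemidef.1 (CFC.posPart_nonneg M)
  have hneg : M⁻.PosSemidef := Matrix.nonneg_iff_posSemidef.1 (CFC.negPart_nonneg M)
  calc lam * M⁺.trace - Lam * M⁻.trace ≤ (B * M⁺).trace - (B * M⁻).trace :=
        sub_le_sub (mul_trace_le_trace_mul hB hpos) (trace_mul_le_mul_trace hB hneg)
    _ = (B * M).trace := by
        rw [← Matrix.trace_sub, ← Matrix.mul_sub, CFC.posPart_sub_negPart M hM]

theorem mul_trace_le_pucciMinus (hLam : lam ≤ Lam) (hN : N.PosSemidef) :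
    lam * N.trace ≤ pucciMinus n lam Lam N :=
  le_pucciMinus hLam fun _ hA => mul_trace_le_trace_mul hA hN

theorem mul_le_pucciMinus_smul_one (hLam : lam ≤ Lam) {α : ℝ} (hα : α ≤ 0) :
    α * (Lam * n) ≤ pucciMinus n lam Lam (α • 1) := by
  refine le_pucciMinus hLam fun A hA => ?_
  have := trace_mul_le_mul_trace hA Matrix.PosSemidef.one
  simp only [Matrix.mul_one, Matrix.trace_one, Fintype.card_fin] at this
  simpa using mul_le_mul_of_nonpos_left this hα

theorem pucciMinus_add_le (hLam : lam ≤ Lam) (hM : M.IsHermitian) (hN : N.IsHermitian) :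
    pucciMinus n lam Lam M + pucciMinus n lam Lam N ≤ pucciMinus n lam Lam (M + N) := by
  refine le_pucciMinus hLam fun A hA => ?_
  rw [Matrix.mul_add, Matrix.trace_add]
  exact add_le_add (pucciMinus_le_trace_mul hA hM) (pucciMinus_le_trace_mul hA hN)

theorem posSemidef_smul_vecMulVec_self {β : ℝ} (hβ : 0 ≤ β) (v : Fin n → ℝ) :
    (β • Matrix.vecMulVec v v).PosSemidef := by
  simpa using (Matrix.posSemidef_vecMulVec_self_star v).smul hβ

theorem mul_norm_sq_le_pucciMinus (hLam : lam ≤ Lam) {β : ℝ} (hβ : 0 ≤ β)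
    (v : EuclideanSpace ℝ (Fin n)) :
    β * (lam * ‖v‖ ^ 2) ≤ pucciMinus n lam Lam (β • Matrix.vecMulVec v v) := by
  refine le_trans (le_of_eq ?_)
    (mul_trace_le_pucciMinus hLam (posSemidef_smul_vecMulVec_self hβ v))
  rw [Matrix.trace_smul, Matrix.trace_vecMulVec, EuclideanSpace.real_norm_sq_eq, smul_eq_mul]
  simp only [dotProduct, sq]
  ring

theorem det_le_trace_pow {ι : Type*} [Fintype ι] [DecidableEq ι] {N : Matrix ι ι ℝ}
    (hN : N.PosSemidef) : N.det ≤ N.trace ^ Fintype.card ι := by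
  rw [hN.1.det_eq_prod_eigenvalues, hN.1.trace_eq_sum_eigenvalues]
  have h0 := hN.eigenvalues_nonneg
  calc ∏ i, hN.1.eigenvalues i ≤ ∏ i, ∑ j, hN.1.eigenvalues j :=
        Finset.prod_le_prod (fun i _ => h0 i)
          fun i _ => Finset.single_le_sum (fun j _ => h0 j) (Finset.mem_univ i)
    _ = _ := by simp

theorem isClosed_setOf_posSemidef {ι : Type*} [Finite ι] :
    IsClosed {M : Matrix ι ι ℝ | M.PosSemidef} := by
  have := Fintype.ofFinite ι
  simp only [Matrix.posSemidef_iff_dotProduct_mulVec, Matrix.IsHermitian, Set.ofPred_and,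
    Set.ofPred_forall]
  exact (isClosed_eq continuous_id.matrix_conjTranspose continuous_id).inter
    (isClosed_iInter fun v => isClosed_le continuous_const
      (continuous_const.dotProduct (continuous_id.matrix_mulVec continuous_const)))

end PucciOperators

section SecondOrderCalculus

open Filter Topology
open scoped Gradient

theorem deriv_deriv_nonneg_of_isLocalMin {g : ℝ → ℝ} {t : ℝ} (hg : ContinuousAt g t)
    (hmin : IsLocalMin g t) : 0 ≤ deriv (deriv g) t := by
  by_contra! hneg
  have hmax : IsLocalMax g t := isLocalMax_of_deriv_deriv_neg hneg hmin.deriv_eq_zero hg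
  have hconst : g =ᶠ[𝓝 t] fun _ => g t := by
    filter_upwards [hmin, hmax] with s h₁ h₂ using le_antisymm h₂ h₁
  have hzero := hconst.deriv.deriv_eq
  simp only [deriv_const', deriv_const] at hzero
  exact hneg.ne hzero

section NormedSpace

variable {E F : Type*} [NormedAddCommGroup E] [NormedSpace ℝ E] [NormedAddCommGroup F]
  [NormedSpace ℝ F]

theorem hasFDerivAt_fderiv_of_contDiffAt {w : E → F} {x : E} (hw : ContDiffAt ℝ 2 w x) :
    HasFDerivAt (fderiv ℝ w) (fderiv ℝ (fderiv ℝ w) x) x :=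
  ((hw.fderiv_right (m := 1) (by norm_num)).differentiableAt (by norm_num)).hasFDerivAt

theorem eventually_hasFDerivAt_of_contDiffAt {w : E → F} {x : E} (hw : ContDiffAt ℝ 2 w x) :
    ∀ᶠ y in 𝓝 x, HasFDerivAt w (fderiv ℝ w y) y :=
  (hw.eventually (by simp)).mono fun _ hy => (hy.differentiableAt (by norm_num)).hasFDerivAt

theorem fderiv_fderiv_self_nonneg_of_isLocalMin {w : E → ℝ} {x : E} (hw : ContDiffAt ℝ 2 w x)
    (hmin : IsLocalMin w x) (v : E) : 0 ≤ fderiv ℝ (fderiv ℝ w) x v v := by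
  have hline (t : ℝ) : HasDerivAt (fun t : ℝ => x + t • v) v t := by
    simpa using ((hasDerivAt_id t).smul_const v).const_add x
  have hx : x = x + (0 : ℝ) • v := by simp
  have htend : Tendsto (fun t : ℝ => x + t • v) (𝓝 0) (𝓝 x) := by
    simpa using (hline 0).continuousAt.tendsto
  have hfirst : deriv (fun t : ℝ => w (x + t • v)) =ᶠ[𝓝 0] fun t => fderiv ℝ w (x + t • v) v := by
    filter_upwards [htend.eventually (eventually_hasFDerivAt_of_contDiffAt hw)] with t ht
    exact (ht.comp_hasDerivAt t (hline t)).deriv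
  have hsecond : deriv (deriv fun t : ℝ => w (x + t • v)) 0 = fderiv ℝ (fderiv ℝ w) x v v := by
    have h : HasDerivAt (fun t : ℝ => fderiv ℝ w (x + t • v)) (fderiv ℝ (fderiv ℝ w) x v) 0 :=
      (hasFDerivAt_fderiv_of_contDiffAt hw).comp_hasDerivAt_of_eq (0 : ℝ) (hline 0) hx
    rw [hfirst.deriv_eq]
    exact ((ContinuousLinearMap.apply ℝ ℝ v).hasFDerivAt.comp_hasDerivAt (0 : ℝ) h).deriv
  rw [← hsecond]
  refine deriv_deriv_nonneg_of_isLocalMin ?_ ?_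
  · exact hw.continuousAt.comp_of_eq (hline 0).continuousAt hx.symm
  · simpa [IsLocalMin, IsMinFilter] using htend.eventually hmin

end NormedSpace

variable {n : ℕ} {v w : EuclideanSpace ℝ (Fin n) → ℝ} {x : EuclideanSpace ℝ (Fin n)}

theorem hess_apply_of_hasFDerivAt
    {w' : EuclideanSpace ℝ (Fin n) → EuclideanSpace ℝ (Fin n) →L[ℝ] ℝ}
    {w'' : EuclideanSpace ℝ (Fin n) →L[ℝ] EuclideanSpace ℝ (Fin n) →L[ℝ] ℝ}
    (hw : ∀ᶠ y in 𝓝 x, HasFDerivAt w (w' y) y) (hw' : HasFDerivAt w' w'' x) (i j : Fin n) :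
    hess n w x i j = w'' (EuclideanSpace.single i 1) (EuclideanSpace.single j 1) := by
  have hj : (fun y => fderiv ℝ w y (EuclideanSpace.single j 1))
      =ᶠ[𝓝 x] fun y => w' y (EuclideanSpace.single j 1) :=
    hw.mono fun _ hy => DFunLike.congr_fun hy.fderiv _
  rw [hess, hj.fderiv_eq, (hw'.clm_apply (hasFDerivAt_const _ x)).fderiv]
  simp

theorem hess_apply (hw : ContDiffAt ℝ 2 w x) (i j : Fin n) :
    hess n w x i j =
      fderiv ℝ (fderiv ℝ w) x (EuclideanSpace.single i 1) (EuclideanSpace.single j 1) :=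
  hess_apply_of_hasFDerivAt (eventually_hasFDerivAt_of_contDiffAt hw)
    (hasFDerivAt_fderiv_of_contDiffAt hw) i j

theorem fderiv_fderiv_apply_eq_dotProduct (hw : ContDiffAt ℝ 2 w x)
    (y z : EuclideanSpace ℝ (Fin n)) :
    fderiv ℝ (fderiv ℝ w) x y z = y.ofLp ⬝ᵥ (hess n w x).mulVec z.ofLp := by
  conv_lhs => rw [← (EuclideanSpace.basisFun (Fin n) ℝ).sum_repr y,
    ← (EuclideanSpace.basisFun (Fin n) ℝ).sum_repr z]
  simp only [EuclideanSpace.basisFun_repr, EuclideanSpace.basisFun_apply, map_sum, map_smul,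
    sum_apply, smul_apply, smul_eq_mul, dotProduct, Matrix.mulVec, hess_apply hw, Finset.mul_sum]
  exact Finset.sum_comm.trans (by simp only [mul_left_comm, mul_comm])

theorem isHermitian_hess (hw : ContDiffAt ℝ 2 w x) : (hess n w x).IsHermitian := by
  ext i j
  rw [Matrix.conjTranspose_apply, hess_apply hw, hess_apply hw, star_trivial]
  exact hw.isSymmSndFDerivAt (by simp) _ _

theorem hess_add (hv : ContDiffAt ℝ 2 v x) (hw : ContDiffAt ℝ 2 w x) :
    hess n (fun y => v y + w y) x = hess n v x + hess n w x := by
  ext i j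
  have hadd : ∀ᶠ y in 𝓝 x,
      HasFDerivAt (fun y => v y + w y) (fderiv ℝ v y + fderiv ℝ w y) y := by
    filter_upwards [eventually_hasFDerivAt_of_contDiffAt hv,
      eventually_hasFDerivAt_of_contDiffAt hw] with y h₁ h₂ using h₁.add h₂
  rw [hess_apply_of_hasFDerivAt hadd
    ((hasFDerivAt_fderiv_of_contDiffAt hv).add (hasFDerivAt_fderiv_of_contDiffAt hw)),
    Matrix.add_apply, hess_apply hv, hess_apply hw]
  rfl

theorem hess_continuousLinearMap (ℓ : EuclideanSpace ℝ (Fin n) →L[ℝ] ℝ) : hess n ℓ x = 0 := by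
  ext i j
  rw [hess_apply_of_hasFDerivAt (Eventually.of_forall fun _ => ℓ.hasFDerivAt)
    (hasFDerivAt_const ℓ x)]
  rfl

theorem posSemidef_hess_of_isLocalMin (hw : ContDiffAt ℝ 2 w x) (hmin : IsLocalMin w x) :
    (hess n w x).PosSemidef := by
  refine Matrix.PosSemidef.of_dotProduct_mulVec_nonneg (isHermitian_hess hw) fun y => ?_
  rw [star_trivial]
  simpa only [fderiv_fderiv_apply_eq_dotProduct hw] using
    fderiv_fderiv_self_nonneg_of_isLocalMin hw hmin (WithLp.toLp 2 y)

theorem gradient_eq_of_isLocalMin_sub_inner {p : EuclideanSpace ℝ (Fin n)}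
    (hw : DifferentiableAt ℝ w x) (hmin : IsLocalMin (fun y => w y - inner ℝ p y) x) :
    ∇ w x = p := by
  have h := hmin.hasFDerivAt_eq_zero (hw.hasFDerivAt.sub (innerSL ℝ p).hasFDerivAt)
  refine ext_inner_right ℝ fun y => ?_
  simpa [inner_gradient_left, sub_eq_zero] using DFunLike.congr_fun h y

theorem posSemidef_hess_of_isLocalMin_sub_inner {p : EuclideanSpace ℝ (Fin n)}
    (hw : ContDiffAt ℝ 2 w x) (hmin : IsLocalMin (fun y => w y - inner ℝ p y) x) :
    (hess n w x).PosSemidef := by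
  have hp : ContDiffAt ℝ 2 (innerSL ℝ p) x := (innerSL ℝ p).contDiff.contDiffAt
  have h := hess_add (hw.sub hp) hp
  simp only [sub_add_cancel, hess_continuousLinearMap, add_zero] at h
  exact h ▸ posSemidef_hess_of_isLocalMin (hw.sub hp) hmin

theorem continuousOn_hess {D : Set (EuclideanSpace ℝ (Fin n))} (hD : IsOpen D)
    (hw : ContDiffOn ℝ 2 w D) : ContinuousOn (hess n w) D := by
  have h₁ : ContDiffOn ℝ 1 (fderiv ℝ w) D := hw.fderiv_of_isOpen hD (by norm_num)
  have h₂ := (h₁.fderiv_of_isOpen (m := 0) hD (by norm_num)).continuousOn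
  refine continuousOn_pi.2 fun i => continuousOn_pi.2 fun j => ?_
  exact ((h₂.clm_apply continuousOn_const).clm_apply continuousOn_const).congr fun x hx =>
    hess_apply (hw.contDiffAt (hD.mem_nhds hx)) i j

theorem hasFDerivAt_gradient (hw : ContDiffAt ℝ 2 w x) :
    HasFDerivAt (∇ w) (Matrix.toEuclideanCLM (𝕜 := ℝ) (hess n w x)) x := by
  have h := ((InnerProductSpace.toDual ℝ (EuclideanSpace ℝ (Fin n))).symm.toContinuousLinearEquiv
    |>.hasFDerivAt).comp x (hasFDerivAt_fderiv_of_contDiffAt hw)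
  refine h.congr_fderiv (ContinuousLinearMap.ext fun y => ext_inner_left ℝ fun z => ?_)
  have hsymm : fderiv ℝ (fderiv ℝ w) x y z = fderiv ℝ (fderiv ℝ w) x z y :=
    hw.isSymmSndFDerivAt (by simp) _ _
  rw [real_inner_comm]
  simp [hsymm, fderiv_fderiv_apply_eq_dotProduct hw, PiLp.inner_apply, dotProduct, mul_comm]

theorem det_toEuclideanCLM (M : Matrix (Fin n) (Fin n) ℝ) :
    (Matrix.toEuclideanCLM (𝕜 := ℝ) M).det = M.det := by
  rw [ContinuousLinearMap.det, Matrix.coe_toEuclideanCLM_eq_toEuclideanLin]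
  exact LinearMap.det_toLin (PiLp.basisFun 2 ℝ (Fin n)) M

end SecondOrderCalculus

section Barriers

variable {n : ℕ} {F F' : ℝ → ℝ} {z x : EuclideanSpace ℝ (Fin n)}

theorem hasFDerivAt_radial {a : ℝ} (hF : HasDerivAt F a (‖x - z‖ ^ 2)) :
    HasFDerivAt (fun y => F (‖y - z‖ ^ 2)) ((2 * a) • innerSL ℝ (x - z)) x := by
  refine (hF.comp_hasFDerivAt x ((hasFDerivAt_id x).sub_const z).norm_sq).congr_fderiv ?_
  ext y
  simp
  ring

theorem gradNorm_radial {a : ℝ} (hF : HasDerivAt F a (‖x - z‖ ^ 2)) :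
    gradNorm n (fun y => F (‖y - z‖ ^ 2)) x = 2 * |a| * ‖x - z‖ := by
  rw [gradNorm, (hasFDerivAt_radial hF).fderiv, norm_smul, innerSL_apply_norm, Real.norm_eq_abs,
    abs_mul, abs_two]

theorem hess_radial {b : ℝ} (hF : ∀ s, HasDerivAt F (F' s) s)
    (hF' : HasDerivAt F' b (‖x - z‖ ^ 2)) :
    hess n (fun y => F (‖y - z‖ ^ 2)) x =
      (2 * F' (‖x - z‖ ^ 2)) • (1 : Matrix (Fin n) (Fin n) ℝ)
        + (4 * b) • Matrix.vecMulVec (x - z) (x - z) := by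
  ext i j
  have hinner : HasFDerivAt (fun y => innerSL ℝ (y - z)) (innerSL ℝ) x :=
    (innerSL ℝ (E := EuclideanSpace ℝ (Fin n))).hasFDerivAt.comp x ((hasFDerivAt_id x).sub_const z)
  rw [hess_apply_of_hasFDerivAt (Filter.Eventually.of_forall fun y => hasFDerivAt_radial (hF _))
    (((hasFDerivAt_radial hF').const_mul 2).smul hinner)]
  change 2 * F' (‖x - z‖ ^ 2)
      * inner ℝ (EuclideanSpace.single i (1 : ℝ)) (EuclideanSpace.single j 1)
    + 2 * (2 * b * inner ℝ (x - z) (EuclideanSpace.single i 1))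
      * inner ℝ (x - z) (EuclideanSpace.single j 1) = _
  simp [Matrix.one_apply, Matrix.vecMulVec_apply, EuclideanSpace.inner_single_right, eq_comm]
  ring

theorem contDiff_radial (hF : ContDiff ℝ 2 F) (z : EuclideanSpace ℝ (Fin n)) :
    ContDiff ℝ 2 fun y => F (‖y - z‖ ^ 2) :=
  hF.comp ((contDiff_id.sub contDiff_const).norm_sq ℝ)

theorem le_pucciMinus_hess_radial {lam Lam b : ℝ} (hLam : lam ≤ Lam)
    (hF : ∀ s, HasDerivAt F (F' s) s) (hF' : HasDerivAt F' b (‖x - z‖ ^ 2))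
    (hdecr : F' (‖x - z‖ ^ 2) ≤ 0) (hb : 0 ≤ b) :
    2 * F' (‖x - z‖ ^ 2) * (Lam * n) + 4 * b * (lam * ‖x - z‖ ^ 2)
      ≤ pucciMinus n lam Lam (hess n (fun y => F (‖y - z‖ ^ 2)) x) := by
  have hrank : (4 * b) • Matrix.vecMulVec (x - z) (x - z) |>.PosSemidef :=
    posSemidef_smul_vecMulVec_self (by positivity) _
  rw [hess_radial hF hF']
  exact (add_le_add (mul_le_pucciMinus_smul_one hLam (by linarith))
    (mul_norm_sq_le_pucciMinus hLam (by positivity) (x - z))).trans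
      (pucciMinus_add_le hLam (Matrix.isHermitian_one.smul (.all _)) hrank.1)

theorem hasFDerivAt_coordQuadratic (k : Fin n) (c₁ c₂ : ℝ) (x : EuclideanSpace ℝ (Fin n)) :
    HasFDerivAt (fun y : EuclideanSpace ℝ (Fin n) => c₁ * y k + c₂ * y k ^ 2)
      ((c₁ + 2 * c₂ * x k) • (EuclideanSpace.proj k : EuclideanSpace ℝ (Fin n) →L[ℝ] ℝ)) x := by
  have hk := (EuclideanSpace.proj k : EuclideanSpace ℝ (Fin n) →L[ℝ] ℝ).hasFDerivAt (x := x)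
  refine ((hk.const_mul c₁).add ((hk.pow 2).const_mul c₂)).congr_fderiv ?_
  ext y
  simp
  ring

theorem gradNorm_coordQuadratic_le (k : Fin n) (c₁ c₂ : ℝ) (x : EuclideanSpace ℝ (Fin n)) :
    gradNorm n (fun y => c₁ * y k + c₂ * y k ^ 2) x ≤ |c₁ + 2 * c₂ * x k| := by
  rw [gradNorm, (hasFDerivAt_coordQuadratic k c₁ c₂ x).fderiv, norm_smul, Real.norm_eq_abs]
  exact mul_le_of_le_one_right (abs_nonneg _) (ContinuousLinearMap.opNorm_le_bound _ zero_le_one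
    fun y => by simpa using PiLp.norm_apply_le y k)

theorem hess_coordQuadratic (k : Fin n) (c₁ c₂ : ℝ) (x : EuclideanSpace ℝ (Fin n)) :
    hess n (fun y => c₁ * y k + c₂ * y k ^ 2) x =
      (2 * c₂) • Matrix.vecMulVec (EuclideanSpace.single k (1 : ℝ))
        (EuclideanSpace.single k (1 : ℝ)) := by
  ext i j
  have hk := (EuclideanSpace.proj k : EuclideanSpace ℝ (Fin n) →L[ℝ] ℝ).hasFDerivAt (x := x)
  rw [hess_apply_of_hasFDerivAt
    (Filter.Eventually.of_forall fun y => hasFDerivAt_coordQuadratic k c₁ c₂ y)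
    (((hk.const_mul (2 * c₂)).const_add c₁).smul_const
      (EuclideanSpace.proj k : EuclideanSpace ℝ (Fin n) →L[ℝ] ℝ))]
  by_cases hi : k = i <;> simp [Matrix.vecMulVec_apply, Pi.single_apply, eq_comm, hi]

theorem contDiff_coordQuadratic (k : Fin n) (c₁ c₂ : ℝ) :
    ContDiff ℝ 2 fun y : EuclideanSpace ℝ (Fin n) => c₁ * y k + c₂ * y k ^ 2 := by
  fun_prop

theorem le_pucciMinus_hess_coordQuadratic {lam Lam c₂ : ℝ} (hLam : lam ≤ Lam) (k : Fin n)
    (c₁ : ℝ) (hc₂ : 0 ≤ c₂) :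
    2 * c₂ * lam ≤ pucciMinus n lam Lam (hess n (fun y => c₁ * y k + c₂ * y k ^ 2) x) := by
  rw [hess_coordQuadratic]
  simpa using mul_norm_sq_le_pucciMinus hLam (by positivity : 0 ≤ 2 * c₂)
    (EuclideanSpace.single k (1 : ℝ))

end Barriers

section AreaFormula

open MeasureTheory Set
open scoped Gradient

variable {n : ℕ} {v : EuclideanSpace ℝ (Fin n) → ℝ} {S D V : Set (EuclideanSpace ℝ (Fin n))}

theorem volume_image_gradient_le (hD : IsOpen D) (hv : ContDiffOn ℝ 2 v D)
    (hS : MeasurableSet S) (hSD : S ⊆ D) :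
    volume (∇ v '' S) ≤ ∫⁻ x in S, ENNReal.ofReal |(hess n v x).det| := by
  simpa only [det_toEuclideanCLM] using addHaar_image_le_lintegral_abs_det_fderiv volume hS
    fun x hx => (hasFDerivAt_gradient
      (hv.contDiffAt (hD.mem_nhds (hSD hx)))).hasFDerivWithinAt

theorem volume_le_lintegral_of_posSemidef_hess (hD : IsOpen D) (hv : ContDiffOn ℝ 2 v D)
    {G : EuclideanSpace ℝ (Fin n) → ℝ} (hG : ContinuousOn G D) (hS : MeasurableSet S)
    (hSD : S ⊆ D)
    (hV : ∀ p ∈ V, ∃ x ∈ S, ∇ v x = p ∧ (hess n v x).PosSemidef ∧ (hess n v x).trace ≤ G x) :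
    volume V ≤ ∫⁻ x in S, ENNReal.ofReal (G x) ^ n := by
  let C : Set (Matrix (Fin n) (Fin n) ℝ × ℝ) := {z | z.1.PosSemidef ∧ z.1.trace ≤ z.2}
  have hC : IsClosed C := (isClosed_setOf_posSemidef.preimage continuous_fst).inter
    (isClosed_le continuous_fst.matrix_trace continuous_snd)
  obtain ⟨U, hU, hUD⟩ :=
    continuousOn_iff_isClosed.1 ((continuousOn_hess hD hv).prodMk hG) C hC
  let T : Set (EuclideanSpace ℝ (Fin n)) := S ∩ (U ∩ D)
  have hT : MeasurableSet T := hS.inter (hU.measurableSet.inter hD.measurableSet)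
  have hTC : ∀ x ∈ T, (hess n v x).PosSemidef ∧ (hess n v x).trace ≤ G x := fun x hx =>
    (hUD ▸ hx.2 : x ∈ (fun x => (hess n v x, G x)) ⁻¹' C ∩ D).1
  have hVT : V ⊆ ∇ v '' T := fun p hp => by
    obtain ⟨x, hx, rfl, h⟩ := hV p hp
    exact ⟨x, ⟨hx, hUD ▸ ⟨h, hSD hx⟩⟩, rfl⟩
  calc volume V ≤ volume (∇ v '' T) := measure_mono hVT
    _ ≤ ∫⁻ x in T, ENNReal.ofReal |(hess n v x).det| :=
      volume_image_gradient_le hD hv hT (inter_subset_left.trans hSD)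
    _ ≤ ∫⁻ x in T, ENNReal.ofReal (G x) ^ n := by
      refine setLIntegral_mono' hT fun x hx => ?_
      obtain ⟨hpsd, htr⟩ := hTC x hx
      have hdet := (det_le_trace_pow hpsd).trans (pow_le_pow_left₀ hpsd.trace_nonneg htr _)
      rw [Fintype.card_fin] at hdet
      rw [← ENNReal.ofReal_pow (hpsd.trace_nonneg.trans htr), abs_of_nonneg hpsd.det_nonneg]
      exact ENNReal.ofReal_le_ofReal hdet
    _ ≤ _ := lintegral_mono_set inter_subset_left

end AreaFormula

section Supersolutions

open MeasureTheory Set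
open scoped ENNReal

variable {n : ℕ} {g u φ : EuclideanSpace ℝ (Fin n) → ℝ} {D D' S V : Set (EuclideanSpace ℝ (Fin n))}
  {lam Lam β β' γ γ' L e : ℝ}

/-- The bound `‖g⁺‖_{Lⁿ(D)} ≤ F`, raised to the power `n`: `ENNReal.ofReal` truncates `g` to its
positive part. -/
def LnBound (g : EuclideanSpace ℝ (Fin n) → ℝ) (D : Set (EuclideanSpace ℝ (Fin n))) (F : ℝ) :
    Prop :=
  ∫⁻ x in D, ENNReal.ofReal (g x) ^ n ≤ ENNReal.ofReal F ^ n

theorem LnBound.mono (h : LnBound g D γ) (hD : D' ⊆ D) (hγ : γ ≤ γ') : LnBound g D' γ' :=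
  (lintegral_mono_set hD).trans (h.trans (by gcongr))

/-- `u` is a nonnegative supersolution on the open set `D`: `𝓜⁻(D²u) - b|Du| ≤ f` for some
continuous coefficients with `b ≥ 0`, `‖b‖_{Lⁿ(D)} ≤ β` and `‖f⁺‖_{Lⁿ(D)} ≤ γ`. The coefficients
enter the estimates through these two norms only. -/
structure IsSupersolution (lam Lam β γ : ℝ) (D : Set (EuclideanSpace ℝ (Fin n)))
    (u : EuclideanSpace ℝ (Fin n) → ℝ) : Prop where
  isOpen : IsOpen D
  contDiffOn : ContDiffOn ℝ 2 u D
  nonneg : ∀ x ∈ D, 0 ≤ u x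
  exists_coeff : ∃ b f : EuclideanSpace ℝ (Fin n) → ℝ, ContinuousOn b D ∧ ContinuousOn f D ∧
    (∀ x ∈ D, 0 ≤ b x) ∧ LnBound b D β ∧ LnBound f D γ ∧
    ∀ x ∈ D, pucciMinus n lam Lam (hess n u x) - b x * gradNorm n u x ≤ f x

theorem IsSupersolution.mono (h : IsSupersolution lam Lam β γ D u) (hD' : IsOpen D')
    (hD : D' ⊆ D) (hβ : β ≤ β') (hγ : γ ≤ γ') : IsSupersolution lam Lam β' γ' D' u := by
  obtain ⟨b, f, hb, hf, hb0, hbβ, hfγ, heq⟩ := h.exists_coeff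
  exact ⟨hD', h.contDiffOn.mono hD, fun x hx => h.nonneg x (hD hx), b, f, hb.mono hD, hf.mono hD,
    fun x hx => hb0 x (hD hx), hbβ.mono hD hβ, hfγ.mono hD hγ, fun x hx => heq x (hD hx)⟩

theorem add_add_pow_le (x y z : ℝ≥0∞) (n : ℕ) :
    (x + y + z) ^ n ≤ 3 ^ n * (x ^ n + y ^ n + z ^ n) := by
  obtain ⟨w, hw, hx, hy, hz⟩ : ∃ w, (w = x ∨ w = y ∨ w = z) ∧ x ≤ w ∧ y ≤ w ∧ z ≤ w := by
    refine ⟨max x (max y z), ?_, by simp, by simp, by simp⟩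
    rcases max_choice x (max y z) with hx | hx
    · exact .inl hx
    · rcases max_choice y z with hy | hy
      · exact .inr (.inl (hx.trans hy))
      · exact .inr (.inr (hx.trans hy))
  calc (x + y + z) ^ n ≤ (w + w + w) ^ n := by gcongr
    _ = 3 ^ n * w ^ n := by rw [← mul_pow]; ring
    _ ≤ 3 ^ n * (x ^ n + y ^ n + z ^ n) := by
      gcongr
      rcases hw with rfl | rfl | rfl
      · exact le_add_right (le_add_right le_rfl)
      · exact le_add_right (le_add_left le_rfl)
      · exact le_add_left le_rfl

theorem lintegral_affine_pow_le {b f : EuclideanSpace ℝ (Fin n) → ℝ} (hlam : 0 < lam)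
    (hL : 0 ≤ L) (hf : AEMeasurable f (volume.restrict S))
    (hbβ : LnBound b S β) (hfγ : LnBound f S γ) :
    ∫⁻ x in S, ENNReal.ofReal ((f x + b x * L + e) / lam) ^ n ≤
      ENNReal.ofReal (3 / lam) ^ n * (ENNReal.ofReal γ ^ n + ENNReal.ofReal (β * L) ^ n
        + ENNReal.ofReal e ^ n * volume S) := by
  have hpointwise (x : EuclideanSpace ℝ (Fin n)) :
      ENNReal.ofReal ((f x + b x * L + e) / lam) ^ n ≤
        ENNReal.ofReal (3 / lam) ^ n * (ENNReal.ofReal (f x) ^ n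
          + ENNReal.ofReal (b x) ^ n * ENNReal.ofReal L ^ n + ENNReal.ofReal e ^ n) := by
    have hsplit : ENNReal.ofReal (f x + b x * L + e) ≤
        ENNReal.ofReal (f x) + ENNReal.ofReal (b x) * ENNReal.ofReal L + ENNReal.ofReal e := by
      rw [← ENNReal.ofReal_mul' hL]
      exact ENNReal.ofReal_add_le.trans (by gcongr; exact ENNReal.ofReal_add_le)
    rw [div_eq_inv_mul, div_eq_inv_mul, ENNReal.ofReal_mul (by positivity),
      ENNReal.ofReal_mul (by positivity), mul_pow, mul_pow, mul_assoc,
      ENNReal.ofReal_ofNat, ← mul_pow (ENNReal.ofReal (b x))]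
    gcongr
    exact (pow_le_pow_left₀ zero_le hsplit n).trans (add_add_pow_le _ _ _ n)
  refine (lintegral_mono hpointwise).trans ?_
  rw [lintegral_const_mul' _ _ (by finiteness), lintegral_add_right _ measurable_const,
    lintegral_add_left' (hf.ennreal_ofReal.pow_const n), lintegral_mul_const' _ _ (by finiteness),
    setLIntegral_const, ENNReal.ofReal_mul' hL, mul_pow (ENNReal.ofReal β)]
  gcongr
  exacts [hfγ, hbβ]

theorem trace_le_of_pucciMinus_add_le {P N : Matrix (Fin n) (Fin n) ℝ} {s : ℝ} (hlam : 0 < lam)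
    (hLam : lam ≤ Lam) (hN : N.PosSemidef) (hP : P.IsHermitian)
    (he : -e ≤ pucciMinus n lam Lam P) (hs : pucciMinus n lam Lam (N + P) ≤ s) :
    N.trace ≤ (s + e) / lam := by
  rw [le_div_iff₀ hlam]
  linarith [mul_trace_le_pucciMinus hLam hN, pucciMinus_add_le hLam hN.1 hP]

/-- At a contact point the Hessian of `u - φ` is nonnegative and the equation bounds its trace,
so the area formula for `∇(u - φ)` controls the volume of the set of slopes. -/
theorem IsSupersolution.volume_slopes_le (hlam : 0 < lam) (hLam : lam ≤ Lam)
    (h : IsSupersolution lam Lam β γ D u) (hφ : ContDiffOn ℝ 2 φ D) (hS : MeasurableSet S)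
    (hSD : S ⊆ D) (hL : 0 ≤ L)
    (hV : ∀ p ∈ V, ∃ x ∈ S, IsLocalMin (fun y => u y - φ y - inner ℝ p y) x ∧
      ‖p‖ + gradNorm n φ x ≤ L ∧ -e ≤ pucciMinus n lam Lam (hess n φ x)) :
    volume V ≤ ENNReal.ofReal (3 / lam) ^ n * (ENNReal.ofReal γ ^ n
      + ENNReal.ofReal (β * L) ^ n + ENNReal.ofReal e ^ n * volume S) := by
  obtain ⟨b, f, hb, hf, hb0, hbβ, hfγ, heq⟩ := h.exists_coeff
  have hfm : AEMeasurable f (volume.restrict S) :=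
    (hf.aemeasurable h.isOpen.measurableSet).mono_measure (Measure.restrict_mono hSD le_rfl)
  refine le_trans ?_ (lintegral_affine_pow_le hlam hL hfm (hbβ.mono hSD le_rfl)
    (hfγ.mono hSD le_rfl))
  refine volume_le_lintegral_of_posSemidef_hess h.isOpen (h.contDiffOn.sub hφ)
    (((hf.add (hb.mul continuousOn_const)).add continuousOn_const).div_const _) hS hSD
    fun p hp => ?_
  obtain ⟨x, hxS, hmin, hgrad, he⟩ := hV p hp
  have hu := h.contDiffOn.contDiffAt (h.isOpen.mem_nhds (hSD hxS))
  have hφx := hφ.contDiffAt (h.isOpen.mem_nhds (hSD hxS))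
  have hdiff : DifferentiableAt ℝ (fun y => u y - φ y) x :=
    (hu.sub hφx).differentiableAt (by norm_num)
  have hslope : gradient (fun y => u y - φ y) x = p :=
    gradient_eq_of_isLocalMin_sub_inner hdiff hmin
  have hpsd := posSemidef_hess_of_isLocalMin_sub_inner (hu.sub hφx) hmin
  have hhess := hess_add (hu.sub hφx) hφx
  simp only [sub_add_cancel] at hhess
  have hgradu : gradNorm n u x ≤ L := by
    have hsum := fderiv_fun_add hdiff (hφx.differentiableAt (by norm_num))
    simp only [sub_add_cancel] at hsum
    rw [gradNorm, hsum]
    refine (norm_add_le _ _).trans (le_trans (le_of_eq ?_) hgrad)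
    rw [← hslope, ← toDual_gradient, LinearIsometryEquiv.norm_map, gradNorm]
  refine ⟨x, hxS, hslope, hpsd,
    trace_le_of_pucciMinus_add_le hlam hLam hpsd (isHermitian_hess hφx) he ?_⟩
  rw [← hhess]
  linarith [heq x (hSD hxS), mul_le_mul_of_nonneg_left hgradu (hb0 x (hSD hxS))]

end Supersolutions

section MaximumPrinciple

open MeasureTheory Metric Set
open scoped ENNReal

variable {n : ℕ} {u φ : EuclideanSpace ℝ (Fin n) → ℝ} {D S : Set (EuclideanSpace ℝ (Fin n))}
  {lam Lam β γ d e G L ℓ : ℝ}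

/-- The volume of the unit ball of `ℝⁿ`, as a real number. -/
noncomputable def unitBallVolume (n : ℕ) : ℝ :=
  volume.real (ball (0 : EuclideanSpace ℝ (Fin n)) 1)

theorem unitBallVolume_pos (n : ℕ) : 0 < unitBallVolume n :=
  ENNReal.toReal_pos (measure_ball_pos _ _ one_pos).ne' measure_ball_lt_top.ne

theorem volume_ball_eq [NeZero n] (x : EuclideanSpace ℝ (Fin n)) {r : ℝ} (hr : 0 ≤ r) :
    volume (ball x r) = ENNReal.ofReal (r ^ n * unitBallVolume n) := by
  rw [Measure.addHaar_ball _ _ hr, finrank_euclideanSpace_fin, ENNReal.ofReal_mul (by positivity),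
    unitBallVolume, ofReal_measureReal measure_ball_lt_top.ne]

/-- The constant of the Alexandrov–Bakelman–Pucci estimate: if the `Lⁿ` norms of `f` and of
`b|Du|` at contact points with slopes in a ball of radius `ℓ` are at most `2 * abpConst n lam * ℓ`,
then they account for at most half the volume of that ball. -/
noncomputable def abpConst (n : ℕ) (lam : ℝ) : ℝ := lam / 6 * min 1 (unitBallVolume n / 4)

theorem abpConst_pos (n : ℕ) (hlam : 0 < lam) : 0 < abpConst n lam := by
  have := unitBallVolume_pos n
  unfold abpConst
  positivity

theorem two_mul_abpConst_pow_le [NeZero n] (hlam : 0 < lam) (hℓ : 0 ≤ ℓ) :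
    2 * (3 / lam * (2 * abpConst n lam * ℓ)) ^ n ≤ ℓ ^ n * unitBallVolume n / 2 := by
  set τ := min 1 (unitBallVolume n / 4) with hτ
  have hω := unitBallVolume_pos n
  have hτn : τ ^ n ≤ τ :=
    pow_le_of_le_one (by positivity) (min_le_left _ _) (NeZero.ne n)
  have hscale : 3 / lam * (2 * abpConst n lam * ℓ) = τ * ℓ := by
    rw [abpConst, ← hτ]
    field_simp
    ring
  rw [hscale, mul_pow]
  have := mul_le_mul_of_nonneg_right (hτn.trans (min_le_right _ _)) (pow_nonneg hℓ n)
  linarith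

/-- Slopes filling a ball: the contributions of `f` and `b|Du|` are absorbed. -/
theorem IsSupersolution.volume_ball_slopes_le [NeZero n] (hlam : 0 < lam) (hLam : lam ≤ Lam)
    (h : IsSupersolution lam Lam β γ D u) (hφ : ContDiffOn ℝ 2 φ D) (hS : MeasurableSet S)
    (hSD : S ⊆ D) (hL : 0 ≤ L) (hℓ : 0 ≤ ℓ) (hγ : γ ≤ 2 * abpConst n lam * ℓ)
    (hβ : β * L ≤ 2 * abpConst n lam * ℓ)
    (hV : ∀ p ∈ ball (0 : EuclideanSpace ℝ (Fin n)) ℓ,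
      ∃ x ∈ S, IsLocalMin (fun y => u y - φ y - inner ℝ p y) x ∧
        ‖p‖ + gradNorm n φ x ≤ L ∧ -e ≤ pucciMinus n lam Lam (hess n φ x)) :
    volume (ball (0 : EuclideanSpace ℝ (Fin n)) ℓ) ≤
      2 * (ENNReal.ofReal (3 / lam * e) ^ n * volume S) := by
  set v := volume (ball (0 : EuclideanSpace ℝ (Fin n)) ℓ) with hv
  have hκ := abpConst_pos n hlam
  have hslopes := h.volume_slopes_le hlam hLam hφ hS hSD hL hV
  have hhalf : ENNReal.ofReal (3 / lam) ^ n * (ENNReal.ofReal γ ^ n + ENNReal.ofReal (β * L) ^ n)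
      ≤ v / 2 := by
    calc _ ≤ ENNReal.ofReal (3 / lam) ^ n * (ENNReal.ofReal (2 * abpConst n lam * ℓ) ^ n
            + ENNReal.ofReal (2 * abpConst n lam * ℓ) ^ n) := by gcongr
      _ = ENNReal.ofReal (2 * (3 / lam * (2 * abpConst n lam * ℓ)) ^ n) := by
        rw [ENNReal.ofReal_mul zero_le_two, ENNReal.ofReal_pow (by positivity),
          ENNReal.ofReal_mul (p := 3 / lam) (by positivity), mul_pow, ENNReal.ofReal_ofNat]
        ring
      _ ≤ ENNReal.ofReal (ℓ ^ n * unitBallVolume n / 2) :=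
        ENNReal.ofReal_le_ofReal (two_mul_abpConst_pow_le hlam hℓ)
      _ = v / 2 := by
        rw [ENNReal.ofReal_div_of_pos two_pos, ← volume_ball_eq 0 hℓ, ENNReal.ofReal_ofNat]
  rw [mul_add, ← mul_assoc, ← mul_pow, ← ENNReal.ofReal_mul (by positivity)] at hslopes
  have habsorb := hslopes.trans (add_le_add_left hhalf _)
  nth_rewrite 1 [← hv, ← ENNReal.add_halves v] at habsorb
  have hvfin : v / 2 ≠ ∞ := ENNReal.div_ne_top measure_ball_lt_top.ne two_ne_zero
  rw [ENNReal.add_le_add_iff_left hvfin] at habsorb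
  calc v = 2 * (v / 2) := (ENNReal.mul_div_cancel two_ne_zero ENNReal.ofNat_ne_top).symm
    _ ≤ _ := by gcongr

theorem exists_isLocalMin_of_isCompact {K : Set (EuclideanSpace ℝ (Fin n))} (hD : IsOpen D)
    (hK : IsCompact K) (hKD : K ⊆ D) (hu : ContinuousOn u D)
    {x₀ : EuclideanSpace ℝ (Fin n)} (hx₀ : x₀ ∈ D) (hout : ∀ x ∈ D, x ∉ K → u x₀ < u x) :
    ∃ x ∈ D, IsLocalMin u x ∧ u x ≤ u x₀ := by
  have hx₀K : x₀ ∈ K := by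
    by_contra hx₀K
    exact lt_irrefl _ (hout x₀ hx₀ hx₀K)
  obtain ⟨x, hx, hmin⟩ := hK.exists_isMinOn ⟨x₀, hx₀K⟩ (hu.mono hKD)
  refine ⟨x, hKD hx, ?_, hmin hx₀K⟩
  filter_upwards [hD.mem_nhds (hKD hx)] with y hy
  by_cases hyK : y ∈ K
  · exact hmin hyK
  · exact (hmin hx₀K).trans (hout y hy hyK).le

/-- `φ ≤ u` on the boundary of `D`, for functions defined on `D` only: `φ - u` exceeds each
`η > 0` only inside a compact subset of `D`. -/
def BoundaryLE (D : Set (EuclideanSpace ℝ (Fin n))) (φ u : EuclideanSpace ℝ (Fin n) → ℝ) : Prop :=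
  ∀ η > 0, ∃ K, IsCompact K ∧ K ⊆ D ∧ ∀ x ∈ D, x ∉ K → φ x - u x ≤ η

theorem boundaryLE_of_le_on_sdiff {C : Set (EuclideanSpace ℝ (Fin n))} (hC : IsCompact C)
    (hDC : D ⊆ C) (hφ : Continuous φ) (hψ : Continuous ψ) (hψu : ∀ y ∈ D, ψ y ≤ u y)
    (hφψ : ∀ y ∈ C \ D, φ y ≤ ψ y) : BoundaryLE D φ u := by
  refine fun η hη => ⟨C ∩ {y | η ≤ φ y - ψ y},
    hC.inter_right (isClosed_le continuous_const (hφ.sub hψ)), fun y hy => ?_, fun y hy hyK => ?_⟩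
  · by_contra hyD
    have : η ≤ φ y - ψ y := hy.2
    linarith [hφψ y ⟨hy.1, hyD⟩]
  · have : φ y - ψ y < η := not_le.1 fun hle => hyK ⟨hDC hy, hle⟩
    linarith [hψu y hy]

theorem BoundaryLE.exists_contact (hbd : BoundaryLE D φ u) (hD : IsOpen D)
    (hu : ContinuousOn u D) (hφ : ContinuousOn φ D) (hdiam : ∀ x ∈ D, ∀ y ∈ D, ‖x - y‖ ≤ d)
    {x₀ p : EuclideanSpace ℝ (Fin n)} (hx₀ : x₀ ∈ D) (hp : ‖p‖ * d < φ x₀ - u x₀) :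
    ∃ x ∈ D, IsLocalMin (fun y => u y - φ y - inner ℝ p y) x ∧ u x < φ x := by
  have hosc (y : EuclideanSpace ℝ (Fin n)) (hy : y ∈ D) :
      inner ℝ p y - inner ℝ p x₀ ≤ ‖p‖ * d := by
    rw [← inner_sub_right]
    exact (real_inner_le_norm _ _).trans (by gcongr; exact hdiam y hy x₀ hx₀)
  obtain ⟨K, hK, hKD, hout⟩ := hbd ((φ x₀ - u x₀ - ‖p‖ * d) / 2) (by linarith)
  obtain ⟨x, hx, hmin, hle⟩ := exists_isLocalMin_of_isCompact
    (u := fun y => u y - φ y - inner ℝ p y) hD hK hKD (by fun_prop) hx₀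
    fun y hy hyK => by linarith [hout y hy hyK, hosc y hy]
  exact ⟨x, hx, hmin, by linarith [hosc x hx]⟩

/-- The Alexandrov–Bakelman–Pucci estimate, as a comparison principle. If `φ - u` were too large
at some point, every slope in a ball would be attained at a contact point. -/
theorem IsSupersolution.le_add_of_boundaryLE [NeZero n] (hlam : 0 < lam) (hLam : lam ≤ Lam)
    (h : IsSupersolution lam Lam β γ D u) (hβ : 0 ≤ β) (hβκ : β ≤ abpConst n lam) (hγ : 0 ≤ γ)
    (hφ : ContDiffOn ℝ 2 φ D) (hd : 0 < d) (hdiam : ∀ x ∈ D, ∀ y ∈ D, ‖x - y‖ ≤ d) (hG : 0 ≤ G)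
    (hbd : BoundaryLE D φ u)
    (hsub : ∀ x ∈ D, u x < φ x →
      gradNorm n φ x ≤ G ∧ 0 ≤ pucciMinus n lam Lam (hess n φ x)) :
    ∀ x ∈ D, φ x ≤ u x + d * (γ + G * β) / abpConst n lam := by
  intro x₀ hx₀
  by_contra! hlt
  have hκ := abpConst_pos n hlam
  set ℓ := (φ x₀ - u x₀) / d with hℓ
  have hℓd : ℓ * d = φ x₀ - u x₀ := div_mul_cancel₀ _ hd.ne'
  have hsmall : γ + G * β < abpConst n lam * ℓ := by
    rw [← lt_sub_iff_add_lt', ← hℓd, div_lt_iff₀ hκ] at hlt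
    exact lt_of_mul_lt_mul_left (by linarith) hd.le
  have hGβ : 0 ≤ G * β := by positivity
  have hℓ0 : 0 < ℓ := pos_of_mul_pos_right (by linarith) hκ.le
  have hball : volume (ball (0 : EuclideanSpace ℝ (Fin n)) ℓ) ≤ _ :=
    h.volume_ball_slopes_le (e := 0) (L := ℓ + G) hlam hLam hφ h.isOpen.measurableSet Subset.rfl
      (by positivity) hℓ0.le (by linarith)
      (by linarith [mul_le_mul_of_nonneg_right hβκ hℓ0.le]) fun p hp => by
        have hpℓ : ‖p‖ < ℓ := by simpa using hp
        obtain ⟨x, hx, hmin, hxφ⟩ := hbd.exists_contact h.isOpen h.contDiffOn.continuousOn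
          hφ.continuousOn hdiam hx₀ (hℓd ▸ mul_lt_mul_of_pos_right hpℓ hd)
        exact ⟨x, hx, hmin, by linarith [(hsub x hx hxφ).1], by simpa using (hsub x hx hxφ).2⟩
  rw [mul_zero, ENNReal.ofReal_zero, zero_pow (NeZero.ne n), zero_mul, mul_zero] at hball
  exact (measure_ball_pos _ _ hℓ0).not_ge hball

theorem measurableSet_sublevel (hD : IsOpen D) (hu : ContinuousOn u D) (c : ℝ) :
    MeasurableSet {x ∈ D | u x ≤ c} := by
  obtain ⟨C, hC, hCD⟩ := continuousOn_iff_isClosed.1 hu (Iic c) isClosed_Iic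
  have hsublevel : {x ∈ D | u x ≤ c} = C ∩ D := by
    rw [← hCD]
    exact inter_comm _ _
  exact hsublevel ▸ hC.measurableSet.inter hD.measurableSet

/-- Sliding the paraboloids `-a/2 ‖x - w‖²` with vertices `w ∈ ball z (R / 4)` from below. -/
theorem exists_paraboloid_contact {z p x₁ : EuclideanSpace ℝ (Fin n)} {R t : ℝ} (hR : 0 < R)
    (ht : 0 < t) (hu : ContinuousOn u (ball z R)) (hu0 : ∀ x ∈ ball z R, 0 ≤ u x)
    (hx₁ : x₁ ∈ ball z (R / 4)) (hux₁ : u x₁ ≤ t) (hp : ‖p‖ < 2 * t / R) :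
    ∃ x ∈ ball z R, u x ≤ 2 * t ∧
      IsLocalMin (fun y => u y - -(4 * t / R ^ 2) * ‖y - z‖ ^ 2 - inner ℝ p y) x := by
  set c := 4 * t / R ^ 2 with hc
  have hc0 : 0 < c := by positivity
  set w := z + (2 * c)⁻¹ • p with hw
  have hcR : c * R ^ 2 = 4 * t := by rw [hc]; field_simp
  have hwz : ‖w - z‖ < R / 4 := by
    rw [hw, add_sub_cancel_left, norm_smul, Real.norm_of_nonneg (by positivity),
      inv_mul_lt_iff₀ (by positivity)]
    exact hp.trans_eq (by rw [hc]; field_simp)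
  have hsquare (y : EuclideanSpace ℝ (Fin n)) : u y - -c * ‖y - z‖ ^ 2 - inner ℝ p y =
      u y + c * ‖y - w‖ ^ 2 - (inner ℝ p z + c * ‖(2 * c)⁻¹ • p‖ ^ 2) := by
    rw [hw, ← sub_sub y z, norm_sub_sq_real (y - z), real_inner_smul_right,
      real_inner_comm p, inner_sub_right]
    field_simp
    ring
  have hx₁w : c * ‖x₁ - w‖ ^ 2 < t := by
    have : ‖x₁ - w‖ < R / 2 := by
      rw [mem_ball_iff_norm] at hx₁
      linarith [norm_sub_le_norm_sub_add_norm_sub x₁ z w, norm_sub_rev z w]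
    calc c * ‖x₁ - w‖ ^ 2 < c * (R / 2) ^ 2 := by gcongr
      _ = t := by linarith
  obtain ⟨x, hx, hmin, hle⟩ := exists_isLocalMin_of_isCompact
    (u := fun y => u y - -c * ‖y - z‖ ^ 2 - inner ℝ p y) isOpen_ball
    (isCompact_closedBall z (24 / 25 * R))
    (closedBall_subset_ball (show 24 / 25 * R < R by linarith)) (by fun_prop)
    (ball_subset_ball (by linarith) hx₁) fun x hx hxK => by
      rw [mem_closedBall_iff_norm, not_le] at hxK
      have hxw : 71 / 100 * R ≤ ‖x - w‖ := by
        linarith [norm_sub_le_norm_sub_add_norm_sub x w z]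
      have : c * (71 / 100 * R) ^ 2 ≤ c * ‖x - w‖ ^ 2 := by gcongr
      linarith [hsquare x, hsquare x₁, hu0 x hx]
  have : 0 ≤ c * ‖x - w‖ ^ 2 := by positivity
  exact ⟨x, hx, by linarith [hsquare x, hsquare x₁], hmin⟩

theorem gradNorm_paraboloid {c : ℝ} (hc : 0 ≤ c) (x z : EuclideanSpace ℝ (Fin n)) :
    gradNorm n (fun y => -c * ‖y - z‖ ^ 2) x = 2 * c * ‖x - z‖ := by
  rw [gradNorm_radial (F := fun s => -c * s) (by simpa using (hasDerivAt_id _).const_mul (-c)),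
    abs_neg, abs_of_nonneg hc]

theorem le_pucciMinus_hess_paraboloid (hLam : lam ≤ Lam) {c : ℝ} (hc : 0 ≤ c)
    (x z : EuclideanSpace ℝ (Fin n)) :
    -(2 * c * (Lam * n)) ≤ pucciMinus n lam Lam (hess n (fun y => -c * ‖y - z‖ ^ 2) x) := by
  have := le_pucciMinus_hess_radial (F := fun s => -c * s) (x := x) (z := z) hLam
    (fun s => by simpa using (hasDerivAt_id s).const_mul (-c)) (hasDerivAt_const _ (-c))
    (neg_nonpos.2 hc) le_rfl
  linarith

theorem IsSupersolution.volume_ball_slopes_le_volume_sublevel [NeZero n] (hlam : 0 < lam)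
    (hLam : lam ≤ Lam) {z : EuclideanSpace ℝ (Fin n)} {R t : ℝ} (hR : 0 < R) (ht : 0 < t)
    (h : IsSupersolution lam Lam (abpConst n lam / 5) (abpConst n lam / 5 * t / R) (ball z R) u)
    {x₁ : EuclideanSpace ℝ (Fin n)} (hx₁ : x₁ ∈ ball z (R / 4)) (hux₁ : u x₁ ≤ t) :
    volume (ball (0 : EuclideanSpace ℝ (Fin n)) (2 * t / R)) ≤
      2 * (ENNReal.ofReal (3 / lam * (2 * (4 * t / R ^ 2) * (Lam * n))) ^ n *
        volume {x ∈ ball z R | u x ≤ 2 * t}) := by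
  have hκ := abpConst_pos n hlam
  set c := 4 * t / R ^ 2 with hc
  have hc0 : 0 ≤ c := by positivity
  refine h.volume_ball_slopes_le (φ := fun x => -c * ‖x - z‖ ^ 2) (L := 10 * t / R) hlam hLam
    (contDiff_radial (F := fun s => -c * s) (by fun_prop) z).contDiffOn
    (measurableSet_sublevel h.isOpen h.contDiffOn.continuousOn _) (fun x hx => hx.1)
    (by positivity) (by positivity) (by field_simp; norm_num) (by field_simp; norm_num)
    fun p hp => ?_
  rw [mem_ball_zero_iff] at hp
  obtain ⟨x, hx, hux, hmin⟩ := exists_paraboloid_contact hR ht h.contDiffOn.continuousOn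
    h.nonneg hx₁ hux₁ hp
  refine ⟨x, ⟨hx, hux⟩, hmin, ?_, le_pucciMinus_hess_paraboloid hLam hc0 x z⟩
  rw [mem_ball_iff_norm] at hx
  calc ‖p‖ + gradNorm n (fun y => -c * ‖y - z‖ ^ 2) x ≤ 2 * t / R + 2 * c * R := by
        rw [gradNorm_paraboloid hc0]
        gcongr
    _ = 10 * t / R := by
        rw [hc]
        field_simp
        norm_num

theorem IsSupersolution.volume_ball_le_volume_sublevel [NeZero n] (hlam : 0 < lam)
    (hLam : lam ≤ Lam) {z : EuclideanSpace ℝ (Fin n)} {R t : ℝ} (hR : 0 < R) (ht : 0 < t)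
    (h : IsSupersolution lam Lam (abpConst n lam / 5) (abpConst n lam / 5 * t / R) (ball z R) u)
    {x₁ : EuclideanSpace ℝ (Fin n)} (hx₁ : x₁ ∈ ball z (R / 4)) (hux₁ : u x₁ ≤ t) :
    ENNReal.ofReal ((lam / (12 * (Lam * n))) ^ n / 2) * volume (ball z R) ≤
      volume {x ∈ ball z R | u x ≤ 2 * t} := by
  have := unitBallVolume_pos n
  have hLam0 : 0 < Lam := hlam.trans_le hLam
  have hn : (0 : ℝ) < n := Nat.cast_pos.2 (NeZero.pos n)
  have hball := h.volume_ball_slopes_le_volume_sublevel hlam hLam hR ht hx₁ hux₁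
  set c := 4 * t / R ^ 2 with hc
  rw [volume_ball_eq 0 (by positivity)] at hball
  have hscale : (2 * t / R) ^ n * unitBallVolume n = 2 * ((3 / lam * (2 * c * (Lam * n))) ^ n *
      ((lam / (12 * (Lam * n))) ^ n / 2 * (R ^ n * unitBallVolume n))) := by
    have : 2 * t / R = 3 / lam * (2 * c * (Lam * n)) * (lam / (12 * (Lam * n))) * R := by
      rw [hc]
      field_simp
      norm_num
    rw [this, mul_pow, mul_pow _ (lam / _)]
    ring
  rw [hscale, ENNReal.ofReal_mul zero_le_two, ENNReal.ofReal_ofNat,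
    ENNReal.ofReal_mul (by positivity), ENNReal.ofReal_pow (by positivity),
    ENNReal.ofReal_mul (p := _ / 2) (by positivity), ← volume_ball_eq z hR.le] at hball
  rwa [ENNReal.mul_le_mul_iff_right two_ne_zero ENNReal.ofNat_ne_top,
    ENNReal.mul_le_mul_iff_right (by positivity) (by finiteness)] at hball

end MaximumPrinciple

section ExpansionOfPositivity

open MeasureTheory Metric Set
open scoped ENNReal

variable {n m : ℕ} {u : EuclideanSpace ℝ (Fin n) → ℝ} {z y : EuclideanSpace ℝ (Fin n)}
  {lam Lam γ t R : ℝ}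

/-- The barrier `t (1 - |y - z|² / R²) ^ (m + 2)`, which vanishes on `∂B_R(z)` and, for large `m`,
is a subsolution away from the center. -/
noncomputable def polyBarrier (m : ℕ) (t R : ℝ) (z y : EuclideanSpace ℝ (Fin n)) : ℝ :=
  t * (1 - ‖y - z‖ ^ 2 / R ^ 2) ^ (m + 2)

theorem hasDerivAt_mul_one_sub_div_pow (m : ℕ) (t R s : ℝ) :
    HasDerivAt (fun s => t * (1 - s / R ^ 2) ^ (m + 1))
      (-(t * (m + 1) / R ^ 2) * (1 - s / R ^ 2) ^ m) s := by
  have hinner : HasDerivAt (fun s : ℝ => 1 - s / R ^ 2) (-(1 / R ^ 2)) s :=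
    ((hasDerivAt_id s).div_const _).const_sub 1
  refine ((hinner.fun_pow (m + 1)).const_mul t).congr_deriv ?_
  rw [Nat.add_sub_cancel]
  push_cast
  ring

theorem contDiff_polyBarrier (m : ℕ) (t R : ℝ) (z : EuclideanSpace ℝ (Fin n)) :
    ContDiff ℝ 2 (polyBarrier m t R z) :=
  contDiff_radial (F := fun s => t * (1 - s / R ^ 2) ^ (m + 2)) (by fun_prop) z

theorem one_sub_norm_sq_div_mem_Icc (hy : y ∈ ball z R) :
    1 - ‖y - z‖ ^ 2 / R ^ 2 ∈ Icc (0 : ℝ) 1 := by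
  rw [mem_ball_iff_norm] at hy
  have hR : 0 < R := (norm_nonneg _).trans_lt hy
  refine ⟨sub_nonneg.2 ((div_le_one (by positivity)).2 (by gcongr)), sub_le_self _ (by positivity)⟩

theorem polyBarrier_le (ht : 0 ≤ t) (hy : y ∈ ball z R) : polyBarrier m t R z y ≤ t :=
  have hy := one_sub_norm_sq_div_mem_Icc hy
  mul_le_of_le_one_right ht (pow_le_one₀ hy.1 hy.2)

theorem le_polyBarrier (ht : 0 ≤ t) (hy : y ∈ ball z (R / 2)) :
    t * (3 / 4) ^ (m + 2) ≤ polyBarrier m t R z y := by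
  rw [mem_ball_iff_norm] at hy
  have hR : 0 < R := by linarith [norm_nonneg (y - z)]
  have : ‖y - z‖ ^ 2 / R ^ 2 ≤ 1 / 4 := by
    rw [div_le_iff₀ (by positivity)]
    linarith [pow_le_pow_left₀ (norm_nonneg (y - z)) hy.le 2]
  unfold polyBarrier
  gcongr
  linarith

theorem gradNorm_polyBarrier_le (ht : 0 ≤ t) (hy : y ∈ ball z R) :
    gradNorm n (polyBarrier m t R z) y ≤ 2 * t * (m + 2) / R := by
  obtain ⟨h0, h1⟩ := one_sub_norm_sq_div_mem_Icc hy
  rw [mem_ball_iff_norm] at hy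
  have hR : 0 < R := (norm_nonneg _).trans_lt hy
  have hgrad := gradNorm_radial (n := n) (hasDerivAt_mul_one_sub_div_pow (m + 1) t R (‖y - z‖ ^ 2))
  calc gradNorm n (polyBarrier m t R z) y
      = 2 * (t * (m + 2) / R ^ 2 * (1 - ‖y - z‖ ^ 2 / R ^ 2) ^ (m + 1)) * ‖y - z‖ := by
        refine hgrad.trans ?_
        rw [neg_mul, abs_neg, abs_of_nonneg (by positivity)]
        push_cast
        ring
    _ ≤ 2 * (t * (m + 2) / R ^ 2 * 1) * R := by
        gcongr
        exact pow_le_one₀ h0 h1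
    _ = 2 * t * (m + 2) / R := by field_simp

theorem pucciMinus_hess_polyBarrier_nonneg (hlam : 0 ≤ lam) (hLam : lam ≤ Lam)
    (hm : Lam * n * 4096 ≤ 2 * (m + 1) * lam) (ht : 0 ≤ t) (hy : y ∈ ball z R)
    (hyR : R / 64 ≤ ‖y - z‖) :
    0 ≤ pucciMinus n lam Lam (hess n (polyBarrier m t R z) y) := by
  obtain ⟨h0, -⟩ := one_sub_norm_sq_div_mem_Icc hy
  rw [mem_ball_iff_norm] at hy
  have hR : 0 < R := (norm_nonneg _).trans_lt hy
  set s := ‖y - z‖ ^ 2 / R ^ 2 with hs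
  have hsR : ‖y - z‖ ^ 2 = s * R ^ 2 := by rw [hs]; field_simp
  have hs0 : 1 / 4096 ≤ s := by
    rw [hs, le_div_iff₀ (by positivity)]
    calc 1 / 4096 * R ^ 2 = (R / 64) ^ 2 := by ring
      _ ≤ ‖y - z‖ ^ 2 := by gcongr
  have hpucci := le_pucciMinus_hess_radial (n := n) (lam := lam) (x := y) (z := z) hLam
    (hasDerivAt_mul_one_sub_div_pow (m + 1) t R) (hasDerivAt_mul_one_sub_div_pow m
      (-(t * ((m + 1 : ℕ) + 1) / R ^ 2)) R (‖y - z‖ ^ 2)) ?_ ?_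
  · have hfactor : 0 ≤ 2 * (m + 1) * lam * s - (1 - s) * (Lam * n) := by
      have hΛ : 0 ≤ Lam * n := by have := hlam.trans hLam; positivity
      have hmono := mul_le_mul_of_nonneg_right hm (show 0 ≤ s by positivity)
      have := mul_le_mul_of_nonneg_left hs0 hΛ
      have : 0 ≤ Lam * n * s := by positivity
      linarith
    have : 0 ≤ 2 * (t * (m + 2) / R ^ 2) * (1 - s) ^ m *
        (2 * (m + 1) * lam * s - (1 - s) * (Lam * n)) := by positivity
    refine (this.trans_eq ?_).trans hpucci
    rw [← hs, hsR]
    push_cast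
    field_simp
    ring
  · rw [neg_mul, neg_nonpos]
    positivity
  · rw [← hs, neg_mul, neg_mul, neg_div, neg_mul, neg_neg]
    positivity

theorem boundaryLE_polyBarrier (hR : 0 < R) (hu : ∀ x ∈ ball z R, 0 ≤ u x) :
    BoundaryLE (ball z R) (polyBarrier m t R z) u := by
  refine boundaryLE_of_le_on_sdiff (isCompact_closedBall z R) ball_subset_closedBall
    (contDiff_polyBarrier m t R z).continuous continuous_const hu fun y hy => ?_
  have hyR : dist y z = R := le_antisymm hy.1 (not_lt.1 hy.2)
  rw [polyBarrier, ← dist_eq_norm, hyR, div_self (by positivity), sub_self, zero_pow (by simp),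
    mul_zero]

theorem IsSupersolution.le_of_le_on_ball [NeZero n] (hlam : 0 < lam) (hLam : lam ≤ Lam)
    (hm : Lam * n * 4096 ≤ 2 * (m + 1) * lam) (hR : 0 < R) (ht : 0 ≤ t) (hγ : 0 ≤ γ)
    (h : IsSupersolution lam Lam ((3 / 4) ^ (m + 2) * abpConst n lam / (8 * (m + 2))) γ
      (ball z R) u)
    (hu : ∀ x ∈ ball z (R / 64), t ≤ u x) :
    ∀ x ∈ ball z (R / 2), (3 / 4) ^ (m + 2) / 2 * t - 2 / abpConst n lam * R * γ ≤ u x := by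
  intro x hx
  set κ := abpConst n lam
  have hκ : 0 < κ := abpConst_pos n hlam
  set δ := (3 / 4) ^ (m + 2) * κ / (8 * (m + 2)) with hδ
  have hδκ : δ ≤ κ := by
    rw [hδ, div_le_iff₀ (by positivity)]
    have := mul_le_mul_of_nonneg_right
      (pow_le_one₀ (n := m + 2) (by norm_num) (by norm_num : (3 / 4 : ℝ) ≤ 1)) hκ.le
    have : 0 ≤ κ * m := by positivity
    linarith
  have hcomparison := h.le_add_of_boundaryLE hlam hLam (by positivity) hδκ hγ
    (φ := polyBarrier m t R z) (d := 2 * R) (G := 2 * t * (m + 2) / R)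
    (contDiff_polyBarrier m t R z).contDiffOn (by positivity)
    (fun x hx y hy => by
      rw [← dist_eq_norm]
      linarith [dist_triangle_right x y z, mem_ball.1 hx, mem_ball.1 hy])
    (by positivity) (boundaryLE_polyBarrier hR h.nonneg)
    (fun y hy huy => ⟨gradNorm_polyBarrier_le ht hy,
      pucciMinus_hess_polyBarrier_nonneg hlam.le hLam hm ht hy (by
        by_contra! hyR
        exact (huy.trans_le (polyBarrier_le ht hy)).not_ge (hu y (mem_ball_iff_norm.2 hyR)))⟩)
    x (ball_subset_ball (by linarith) hx)
  have herror : 2 * R * (γ + 2 * t * (m + 2) / R * δ) / κ =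
      2 / κ * R * γ + (3 / 4) ^ (m + 2) / 2 * t := by
    rw [hδ]
    field_simp
    ring
  linarith [le_polyBarrier (m := m) ht hx]

/-- Expansion of positivity, in contrapositive form. -/
theorem exists_lt_of_volume_sublevel_lt (n : ℕ) [NeZero n] (hlam : 0 < lam) (hLam : lam ≤ Lam) :
    ∃ η δ M : ℝ, 0 < η ∧ 0 < δ ∧ 1 < M ∧ ∀ (u : EuclideanSpace ℝ (Fin n) → ℝ)
      (z : EuclideanSpace ℝ (Fin n)) (R t : ℝ), 0 < R → 0 < t →
      IsSupersolution lam Lam δ (δ * t / R) (ball z (16 * R)) u →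
      volume {x ∈ ball z R | u x ≤ M * t} < ENNReal.ofReal η * volume (ball z R) →
      ∀ x ∈ ball z (8 * R), t < u x := by
  have hLam0 : 0 < Lam := hlam.trans_le hLam
  have hn : (0 : ℝ) < n := Nat.cast_pos.2 (NeZero.pos n)
  obtain ⟨m, hm⟩ := exists_nat_ge (Lam * n * 4096 / (2 * lam))
  rw [div_le_iff₀ (by positivity)] at hm
  have hκ := abpConst_pos n hlam
  set c := (3 / 4 : ℝ) ^ (m + 2) / 2 with hc
  have hc0 : 0 < c := by positivity
  have hc1 : c ≤ 1 / 2 := by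
    have : (3 / 4 : ℝ) ^ (m + 2) ≤ 1 := pow_le_one₀ (by norm_num) (by norm_num)
    linarith
  set δ := min (abpConst n lam / 64) ((3 / 4) ^ (m + 2) * abpConst n lam / (8 * (m + 2)))
  have hδ0 : 0 < δ := by positivity
  have hδκ : δ ≤ abpConst n lam / 64 := min_le_left _ _
  refine ⟨(lam / (12 * (Lam * n))) ^ n / 2, δ, 8 / c, by positivity, hδ0,
    by rw [lt_div_iff₀ hc0]; linarith, fun u z R t hR ht h hsub x hx => ?_⟩
  have hlarge (y : EuclideanSpace ℝ (Fin n)) (hy : y ∈ ball z (16 * R / 64)) : 4 * t / c ≤ u y := by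
    by_contra! hlt
    refine hsub.not_ge ?_
    rw [show 8 / c * t = 2 * (4 * t / c) by ring]
    refine (h.mono isOpen_ball (ball_subset_ball (by linarith)) (by linarith) ?_
      ).volume_ball_le_volume_sublevel hlam hLam hR (by positivity)
      (by rwa [show R / 4 = 16 * R / 64 by ring]) hlt.le
    have htc : t ≤ 4 * t / c := by
      rw [le_div_iff₀ hc0]
      nlinarith
    gcongr
    linarith
  have hexpand := (h.mono isOpen_ball Subset.rfl (min_le_right _ _) le_rfl).le_of_le_on_ball hlam
    hLam (by linarith) (by positivity) (by positivity) (by positivity) hlarge x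
    (by rwa [show 16 * R / 2 = 8 * R by ring])
  rw [mul_div_cancel₀ _ hc0.ne'] at hexpand
  have herror : 2 / abpConst n lam * (16 * R) * (δ * t / R) ≤ t / 2 := by
    calc _ ≤ 2 / abpConst n lam * (16 * R) * (abpConst n lam / 64 * t / R) := by gcongr
      _ = t / 2 := by field_simp; norm_num
  linarith

end ExpansionOfPositivity

section Covering

open MeasureTheory Metric Set Module
open scoped ENNReal

theorem exists_countable_disjoint_closedBall_cover {α : Type*} [PseudoMetricSpace α]
    [TopologicalSpace.SeparableSpace α] (A : Set α) (y : α → α) (r : α → ℝ) (R : ℝ)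
    (hr0 : ∀ x ∈ A, 0 < r x) (hrR : ∀ x ∈ A, r x ≤ R) (hx : ∀ x ∈ A, x ∈ closedBall (y x) (r x)) :
    ∃ U ⊆ A, U.Countable ∧ U.PairwiseDisjoint (fun x => closedBall (y x) (r x)) ∧
      A ⊆ ⋃ x ∈ U, closedBall (y x) (4 * r x) := by
  obtain ⟨U, hUA, hdisj, hcov⟩ :=
    Vitali.exists_disjoint_subfamily_covering_enlargement_closedBall A y r R hrR 4 (by norm_num)
  have hU : U.Countable := hdisj.countable_of_nonempty_interior fun x hxU =>
    ⟨y x, ball_subset_interior_closedBall (mem_ball_self (hr0 x (hUA hxU)))⟩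
  refine ⟨U, hUA, hU, hdisj, fun x hxA => ?_⟩
  obtain ⟨w, hw, hsub⟩ := hcov x hxA
  exact mem_biUnion hw (hsub (hx x hxA))

variable {E : Type*} [NormedAddCommGroup E] [NormedSpace ℝ E]

theorem measure_le_of_density_closedBall [FiniteDimensional ℝ E] [MeasurableSpace E]
    [BorelSpace E] {μ : Measure E} [μ.IsAddHaarMeasure] {η R : ℝ} (hη : 0 ≤ η) {A G : Set E}
    (hG : MeasurableSet G) (y : E → E) (r : E → ℝ) (hr0 : ∀ x ∈ A, 0 < r x)
    (hrR : ∀ x ∈ A, r x ≤ R) (hx : ∀ x ∈ A, x ∈ closedBall (y x) (r x))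
    (hdens : ∀ x ∈ A, ENNReal.ofReal η * μ (closedBall (y x) (r x)) ≤
      μ (G ∩ closedBall (y x) (r x))) :
    ENNReal.ofReal (η / 4 ^ finrank ℝ E) * μ A ≤ μ G := by
  obtain ⟨U, hUA, hUc, hdisj, hcov⟩ :=
    exists_countable_disjoint_closedBall_cover A y r R hr0 hrR hx
  have : Countable U := hUc.to_subtype
  have hscale (x : E) (hx : x ∈ A) :
      ENNReal.ofReal (η / 4 ^ finrank ℝ E) * μ (closedBall (y x) (4 * r x)) =
        ENNReal.ofReal η * μ (closedBall (y x) (r x)) := by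
    rw [Measure.addHaar_closedBall_mul _ _ zero_le_four (hr0 x hx).le,
      ← Measure.addHaar_closedBall_center, ← mul_assoc, ← ENNReal.ofReal_mul (by positivity),
      div_mul_cancel₀ _ (by positivity), Measure.addHaar_closedBall_center μ (y x)]
  calc ENNReal.ofReal (η / 4 ^ finrank ℝ E) * μ A
      ≤ ENNReal.ofReal (η / 4 ^ finrank ℝ E) * ∑' x : U, μ (closedBall (y x) (4 * r x)) := by
        gcongr
        exact (measure_mono hcov).trans (measure_biUnion_le _ hUc _)
    _ = ∑' x : U, ENNReal.ofReal η * μ (closedBall (y x) (r x)) := by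
        rw [← ENNReal.tsum_mul_left]
        exact tsum_congr fun x => hscale x (hUA x.2)
    _ ≤ ∑' x : U, μ (G ∩ closedBall (y x) (r x)) :=
        ENNReal.tsum_le_tsum fun x => hdens x (hUA x.2)
    _ = μ (⋃ x : U, G ∩ closedBall (y x) (r x)) :=
        (measure_iUnion (fun a b hab => (hdisj a.2 b.2 (Subtype.coe_ne_coe.2 hab)).mono
          inter_subset_right inter_subset_right) fun x => hG.inter measurableSet_closedBall).symm
    _ ≤ μ G := measure_mono (iUnion_subset fun x => inter_subset_left)

/-- The ball is shifted towards the center of `ball z ρ`, to keep it inside. -/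
theorem exists_closedBall_subset_of_isOpen {A : Set E} {x z : E} {ρ : ℝ} (hA : IsOpen A)
    (hAB : A ⊆ ball z ρ) (hne : (ball z ρ \ A).Nonempty) (hx : x ∈ A) :
    ∃ y r, 0 < r ∧ r < ρ / 2 ∧ x ∈ closedBall y r ∧ closedBall y r ⊆ A ∧
      (ball y (8 * r) ∩ (ball z ρ \ A)).Nonempty := by
  have hxz : dist x z < ρ := hAB hx
  have hρ : 0 < ρ := dist_nonneg.trans_lt hxz
  set d := infDist x (ball z ρ \ A)
  have hd0 : 0 < d := by
    obtain ⟨e, he, hball⟩ := Metric.isOpen_iff.1 hA x hx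
    refine he.trans_le ((le_infDist hne).2 fun w hw => ?_)
    by_contra! hlt
    exact hw.2 (hball (mem_ball'.2 hlt))
  have hdρ : d < 2 * ρ := by
    obtain ⟨w, hw⟩ := hne
    linarith [infDist_le_dist_of_mem (x := x) hw, dist_triangle_right x w z, mem_ball.1 hw.1]
  set y := x + (d / (4 * ρ)) • (z - x) with hy
  have hxy : dist x y ≤ d / 4 := by
    rw [hy, dist_eq_norm, sub_add_cancel_left, norm_neg, norm_smul,
      Real.norm_of_nonneg (by positivity), norm_sub_rev, ← dist_eq_norm]
    calc d / (4 * ρ) * dist x z ≤ d / (4 * ρ) * ρ := by gcongr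
      _ = d / 4 := by field_simp
  have hyz : dist y z + d / 4 < ρ := by
    have hone : d / (4 * ρ) < 1 := by
      rw [div_lt_one (by positivity)]
      linarith
    have hshift : y - z = (1 - d / (4 * ρ)) • (x - z) := by
      rw [hy]
      module
    rw [dist_eq_norm, hshift, norm_smul, Real.norm_of_nonneg (by linarith), ← dist_eq_norm]
    calc (1 - d / (4 * ρ)) * dist x z + d / 4 < (1 - d / (4 * ρ)) * ρ + d / 4 := by gcongr
      _ = ρ := by field_simp; ring
  refine ⟨y, d / 4, by positivity, by linarith, hxy, fun w hw => ?_, ?_⟩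
  · by_contra hwA
    have hwz : w ∈ ball z ρ :=
      mem_ball.2 (by linarith [dist_triangle w y z, mem_closedBall.1 hw])
    linarith [infDist_le_dist_of_mem (x := x) (show w ∈ ball z ρ \ A from ⟨hwz, hwA⟩),
      dist_triangle_right x w y, mem_closedBall.1 hw]
  · obtain ⟨p, hp, hxp⟩ := (infDist_lt_iff hne).1 (show d < 3 / 2 * d by linarith)
    exact ⟨p, by rw [mem_ball]; linarith [dist_triangle_left p y x], hp⟩

theorem measure_le_of_mul_le_measure_sdiff {α : Type*} [MeasurableSpace α] {μ : Measure α}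
    {A A' : Set α} {c : ℝ} (hA' : MeasurableSet A') (hsub : A' ⊆ A) (hfin : μ A ≠ ∞) (hc0 : 0 ≤ c)
    (hc1 : c ≤ 1) (h : ENNReal.ofReal c * μ A ≤ μ (A \ A')) :
    μ A' ≤ ENNReal.ofReal (1 - c) * μ A := by
  have hsplit : μ A' + μ (A \ A') = μ A := by
    have := measure_inter_add_sdiff (μ := μ) A hA'
    rwa [inter_eq_self_of_subset_right hsub] at this
  have hcfin : ENNReal.ofReal c * μ A ≠ ∞ := by finiteness
  rw [← ENNReal.add_le_add_iff_right hcfin, ← add_mul, ← ENNReal.ofReal_add (by linarith) hc0,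
    sub_add_cancel, ENNReal.ofReal_one, one_mul]
  calc μ A' + ENNReal.ofReal c * μ A ≤ μ A' + μ (A \ A') := by gcongr
    _ = μ A := hsplit

end Covering

section WeakIntegrability

open MeasureTheory Metric Set Module
open scoped ENNReal

variable {α : Type*} {c t M ε : ℝ}

theorem ofReal_rpow_le_tsum_indicator {g : α → ℝ} (ht : 0 < t) (hM : 1 < M) (hε : 0 < ε) {x : α}
    (hx : 0 ≤ g x) :
    ENNReal.ofReal (g x ^ ε) ≤ ENNReal.ofReal (t ^ ε) * (1 + ∑' k : ℕ,
      {x | M ^ k * t < g x}.indicator (fun _ => ENNReal.ofReal (M ^ ε) ^ (k + 1)) x) := by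
  classical
  have hM0 : 0 < M := one_pos.trans hM
  have hex : ∃ k : ℕ, g x ≤ M ^ k * t := by
    obtain ⟨k, hk⟩ := pow_unbounded_of_one_lt (g x / t) hM
    exact ⟨k, ((div_lt_iff₀ ht).1 hk).le⟩
  have hk := Nat.find_spec hex
  rcases hfind : Nat.find hex with _ | j
  · rw [hfind, pow_zero, one_mul] at hk
    calc ENNReal.ofReal (g x ^ ε) ≤ ENNReal.ofReal (t ^ ε) * 1 := by
          rw [mul_one]
          gcongr
      _ ≤ _ := by gcongr; exact le_self_add
  · rw [hfind] at hk
    have hj : M ^ j * t < g x := not_le.1 (Nat.find_min hex (by omega))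
    calc ENNReal.ofReal (g x ^ ε) ≤ ENNReal.ofReal ((M ^ (j + 1) * t) ^ ε) := by gcongr
      _ = ENNReal.ofReal (t ^ ε) * ENNReal.ofReal (M ^ ε) ^ (j + 1) := by
        rw [Real.mul_rpow (by positivity) ht.le, ← Real.rpow_natCast_mul hM0.le, mul_comm _ ε,
          Real.rpow_mul_natCast hM0.le, mul_comm, ENNReal.ofReal_mul (by positivity),
          ENNReal.ofReal_pow (by positivity)]
      _ = ENNReal.ofReal (t ^ ε) *
          {x | M ^ j * t < g x}.indicator (fun _ => ENNReal.ofReal (M ^ ε) ^ (j + 1)) x := by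
        rw [indicator_of_mem (show x ∈ {x | M ^ j * t < g x} from hj)]
      _ ≤ _ := by
        gcongr
        exact (ENNReal.le_tsum (f := fun k => {x | M ^ k * t < g x}.indicator
          (fun _ => ENNReal.ofReal (M ^ ε) ^ (k + 1)) x) j).trans le_add_self

theorem tsum_geometric_le {V : ℝ≥0∞} (hc0 : 0 < c) (hc1 : c < 1) {a : ℝ≥0∞}
    (ha : a ≤ ENNReal.ofReal (1 + c)) :
    ∑' k : ℕ, a ^ (k + 1) * (ENNReal.ofReal (1 - c) ^ k * V) ≤
      ENNReal.ofReal ((1 + c) / c ^ 2) * V := by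
  have hratio : (1 - ENNReal.ofReal (1 + c) * ENNReal.ofReal (1 - c))⁻¹ =
      ENNReal.ofReal (c ^ 2)⁻¹ := by
    rw [← ENNReal.ofReal_mul (by linarith), show (1 + c) * (1 - c) = 1 - c ^ 2 by ring,
      ← ENNReal.ofReal_one, ← ENNReal.ofReal_sub _ (by nlinarith), sub_sub_cancel,
      ENNReal.ofReal_inv_of_pos (by positivity)]
  calc ∑' k : ℕ, a ^ (k + 1) * (ENNReal.ofReal (1 - c) ^ k * V)
      ≤ ∑' k : ℕ, ENNReal.ofReal (1 + c) * V *
          (ENNReal.ofReal (1 + c) * ENNReal.ofReal (1 - c)) ^ k := by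
        refine ENNReal.tsum_le_tsum fun k => ?_
        calc _ ≤ ENNReal.ofReal (1 + c) ^ (k + 1) * (ENNReal.ofReal (1 - c) ^ k * V) := by gcongr
          _ = _ := by ring
    _ = ENNReal.ofReal ((1 + c) / c ^ 2) * V := by
        rw [ENNReal.tsum_mul_left, ENNReal.tsum_geometric, hratio, mul_right_comm,
          ← ENNReal.ofReal_mul (by linarith), div_eq_mul_inv]

variable [MeasurableSpace α] {μ : Measure α}

theorem lintegral_rpow_le_of_geometric_decay {g : α → ℝ} (hg : AEMeasurable g μ)
    (hg0 : ∀ᵐ x ∂μ, 0 ≤ g x) (ht : 0 < t) (hM : 1 < M) (hc0 : 0 < c) (hc1 : c < 1) (hε : 0 < ε)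
    (hMε : M ^ ε ≤ 1 + c)
    (hdecay : ∀ k : ℕ, μ {x | M ^ k * t < g x} ≤ ENNReal.ofReal (1 - c) ^ k * μ univ) :
    ∫⁻ x, ENNReal.ofReal (g x ^ ε) ∂μ ≤
      ENNReal.ofReal ((1 + (1 + c) / c ^ 2) * t ^ ε) * μ univ := by
  have hlevel (k : ℕ) : NullMeasurableSet {x | M ^ k * t < g x} μ :=
    nullMeasurableSet_lt aemeasurable_const hg
  calc ∫⁻ x, ENNReal.ofReal (g x ^ ε) ∂μ
      ≤ ∫⁻ x, ENNReal.ofReal (t ^ ε) * (1 + ∑' k : ℕ,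
          {x | M ^ k * t < g x}.indicator (fun _ => ENNReal.ofReal (M ^ ε) ^ (k + 1)) x) ∂μ :=
        lintegral_mono_ae (hg0.mono fun x hx => ofReal_rpow_le_tsum_indicator ht hM hε hx)
    _ = ENNReal.ofReal (t ^ ε) * (μ univ +
          ∑' k : ℕ, ENNReal.ofReal (M ^ ε) ^ (k + 1) * μ {x | M ^ k * t < g x}) := by
        rw [lintegral_const_mul' _ _ (by finiteness), lintegral_add_left measurable_const,
          lintegral_tsum fun k => aemeasurable_const.indicator₀ (hlevel k), lintegral_one]
        simp_rw [lintegral_indicator_const₀ (hlevel _)]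
    _ ≤ ENNReal.ofReal (t ^ ε) * (μ univ + ENNReal.ofReal ((1 + c) / c ^ 2) * μ univ) := by
        gcongr
        refine le_trans ?_ (tsum_geometric_le hc0 hc1 (ENNReal.ofReal_le_ofReal hMε))
        gcongr with k
        exact hdecay k
    _ = ENNReal.ofReal ((1 + (1 + c) / c ^ 2) * t ^ ε) * μ univ := by
        rw [mul_comm _ (t ^ ε), ENNReal.ofReal_mul (by positivity),
          ENNReal.ofReal_add zero_le_one (by positivity), ENNReal.ofReal_one]
        ring

variable {n : ℕ} {lam Lam : ℝ}

theorem exists_volume_superlevel_le (n : ℕ) [NeZero n] (hlam : 0 < lam) (hLam : lam ≤ Lam) :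
    ∃ c δ M : ℝ, 0 < c ∧ c < 1 ∧ 0 < δ ∧ 1 < M ∧ ∀ (u : EuclideanSpace ℝ (Fin n) → ℝ)
      (z : EuclideanSpace ℝ (Fin n)) (ρ t : ℝ), 0 < ρ → 0 < t →
      IsSupersolution lam Lam δ (δ * t / ρ) (ball z (9 * ρ)) u →
      ∀ x₁ ∈ ball z ρ, u x₁ ≤ t → ∀ s, t ≤ s → volume {x ∈ ball z ρ | M * s < u x} ≤
        ENNReal.ofReal (1 - c) * volume {x ∈ ball z ρ | s < u x} := by
  obtain ⟨η, δ, M, hη, hδ, hM, hexpand⟩ := exists_lt_of_volume_sublevel_lt n hlam hLam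
  refine ⟨min (η / 4 ^ n) (1 / 2), δ, M, by positivity,
    (min_le_right _ _).trans_lt (by norm_num), hδ, hM, fun u z ρ t hρ ht h x₁ hx₁ hux₁ s hts => ?_⟩
  have hs : 0 < s := ht.trans_le hts
  have hu : ContinuousOn u (ball z ρ) :=
    h.contDiffOn.continuousOn.mono (ball_subset_ball (by linarith))
  have hopen (a : ℝ) : IsOpen {x ∈ ball z ρ | a < u x} :=
    hu.isOpen_inter_preimage isOpen_ball isOpen_Ioi
  set A := {x ∈ ball z ρ | s < u x}
  set A' := {x ∈ ball z ρ | M * s < u x}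
  have hAB : A ⊆ ball z ρ := fun x hx => hx.1
  have hA'A : A' ⊆ A := fun x hx => ⟨hx.1, (le_mul_of_one_le_left hs.le hM.le).trans_lt hx.2⟩
  choose! y r hr0 hrρ hxy hyA hcontact using fun x (hx : x ∈ A) =>
    exists_closedBall_subset_of_isOpen (hopen s) hAB ⟨x₁, hx₁, fun hx => by linarith [hx.2]⟩ hx
  have hdens (x : EuclideanSpace ℝ (Fin n)) (hx : x ∈ A) :
      ENNReal.ofReal η * volume (closedBall (y x) (r x)) ≤
        volume ((A \ A') ∩ closedBall (y x) (r x)) := by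
    rw [Measure.addHaar_closedBall_eq_addHaar_ball]
    by_contra! hlt
    have hyz : dist (y x) z < ρ := hAB (hyA x hx (mem_closedBall_self (hr0 x hx).le))
    obtain ⟨p, hp, hpz, hpA⟩ := hcontact x hx
    refine hpA ⟨hpz, hexpand u (y x) (r x) s (hr0 x hx) hs (h.mono isOpen_ball
      (ball_subset_ball' (by linarith [hrρ x hx])) le_rfl ?_) (lt_of_le_of_lt ?_ hlt) p hp⟩
    · have := hr0 x hx
      gcongr
      linarith [hrρ x hx]
    · refine measure_mono fun w hw => ?_
      have hwy := ball_subset_closedBall hw.1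
      exact ⟨⟨hyA x hx hwy, fun hwA' => hw.2.not_gt hwA'.2⟩, hwy⟩
  have hspread := measure_le_of_density_closedBall hη.le
    ((hopen s).measurableSet.diff (hopen (M * s)).measurableSet) y r hr0 (fun x hx => (hrρ x hx).le)
    hxy hdens
  rw [finrank_euclideanSpace_fin] at hspread
  refine measure_le_of_mul_le_measure_sdiff (hopen (M * s)).measurableSet hA'A
    ((measure_mono hAB).trans_lt measure_ball_lt_top).ne (by positivity)
    ((min_le_right _ _).trans (by norm_num)) (le_trans ?_ hspread)
  gcongr
  exact min_le_left _ _

theorem exists_lintegral_rpow_le (n : ℕ) [NeZero n] (hlam : 0 < lam) (hLam : lam ≤ Lam) :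
    ∃ ε₀ δ C : ℝ, 0 < ε₀ ∧ 0 < δ ∧ 0 < C ∧ ∀ (u : EuclideanSpace ℝ (Fin n) → ℝ)
      (z : EuclideanSpace ℝ (Fin n)) (ρ t : ℝ), 0 < ρ → 0 < t →
      IsSupersolution lam Lam δ (δ * t / ρ) (ball z (9 * ρ)) u →
      ∀ x₁ ∈ ball z ρ, u x₁ ≤ t → ∀ ε, 0 < ε → ε ≤ ε₀ →
        ∫⁻ x in ball z ρ, ENNReal.ofReal (u x ^ ε) ≤
          ENNReal.ofReal (C * t ^ ε) * volume (ball z ρ) := by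
  obtain ⟨c, δ, M, hc0, hc1, hδ, hM, hstep⟩ := exists_volume_superlevel_le n hlam hLam
  have hlogM : 0 < Real.log M := Real.log_pos hM
  have hlogc : 0 < Real.log (1 + c) := Real.log_pos (by linarith)
  refine ⟨Real.log (1 + c) / Real.log M, δ, 1 + (1 + c) / c ^ 2, by positivity, hδ, by positivity,
    fun u z ρ t hρ ht h x₁ hx₁ hux₁ ε hε hεε₀ => ?_⟩
  have hBD : ball z ρ ⊆ ball z (9 * ρ) := ball_subset_ball (by linarith)
  have hMε : M ^ ε ≤ 1 + c := by
    rw [Real.rpow_def_of_pos (by linarith), ← Real.le_log_iff_exp_le (by linarith), mul_comm]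
    exact (le_div_iff₀ hlogM).1 hεε₀
  have hdecay (k : ℕ) : volume {x ∈ ball z ρ | M ^ k * t < u x} ≤
      ENNReal.ofReal (1 - c) ^ k * volume (ball z ρ) := by
    induction k with
    | zero => simpa using measure_mono fun x hx => hx.1
    | succ k ih =>
      have := hstep u z ρ t hρ ht h x₁ hx₁ hux₁ (M ^ k * t)
        (le_mul_of_one_le_left ht.le (one_le_pow₀ hM.le))
      rw [pow_succ', pow_succ', mul_assoc, mul_assoc]
      exact this.trans (by gcongr)
  rw [← Measure.restrict_apply_univ (ball z ρ)]
  refine lintegral_rpow_le_of_geometric_decay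
    ((h.contDiffOn.continuousOn.mono hBD).aemeasurable measurableSet_ball)
    (ae_restrict_of_forall_mem measurableSet_ball fun x hx => h.nonneg x (hBD hx))
    ht hM hc0 hc1 hε hMε fun k => ?_
  rw [Measure.restrict_apply_univ, Measure.restrict_apply' measurableSet_ball, inter_comm]
  exact hdecay k

end WeakIntegrability

section Hoelder

open MeasureTheory Metric Set
open scoped ENNReal

variable {n : ℕ} {g : EuclideanSpace ℝ (Fin n) → ℝ} {D S : Set (EuclideanSpace ℝ (Fin n))}
  {z : EuclideanSpace ℝ (Fin n)} {q K r : ℝ}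

theorem LpNormE_eq_eLpNorm' (hq : 0 < q) : LpNormE n q g D = eLpNorm' g q (volume.restrict D) := by
  simp only [LpNormE, eLpNorm', Real.enorm_eq_ofReal_abs,
    ENNReal.ofReal_rpow_of_nonneg (abs_nonneg _) hq.le]

theorem lnBound_of_eLpNorm'_le (hn : n ≠ 0)
    (h : eLpNorm' g n (volume.restrict S) ≤ ENNReal.ofReal K) : LnBound g S K := by
  calc ∫⁻ x in S, ENNReal.ofReal (g x) ^ n ≤ ∫⁻ x in S, ‖g x‖ₑ ^ (n : ℝ) := by
        refine lintegral_mono fun x => ?_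
        rw [ENNReal.rpow_natCast, Real.enorm_eq_ofReal_abs]
        gcongr
        exact le_abs_self _
    _ = (eLpNorm' g n (volume.restrict S)) ^ n := by
        rw [eLpNorm', ← ENNReal.rpow_mul_natCast, one_div,
          inv_mul_cancel₀ (Nat.cast_ne_zero.2 hn), ENNReal.rpow_one]
    _ ≤ _ := by gcongr

theorem lnBound_of_LpNormE_le (hn : n ≠ 0) (hq : n ≤ q) (hSD : S ⊆ D)
    (hg : AEMeasurable g (volume.restrict S)) (hK : 0 ≤ K)
    (hL : LpNormE n q g D ≤ ENNReal.ofReal K) (hr : 0 ≤ r) (hball : S ⊆ ball z r) :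
    LnBound g S (K * unitBallVolume n ^ (1 / n - 1 / q) * r ^ (1 - n / q)) := by
  have : NeZero n := ⟨hn⟩
  have hn0 : (0 : ℝ) < n := Nat.cast_pos.2 (NeZero.pos n)
  have hq0 : 0 < q := hn0.trans_le hq
  have hexp : 0 ≤ 1 / (n : ℝ) - 1 / q := sub_nonneg.2 (one_div_le_one_div_of_le hn0 hq)
  have hω := unitBallVolume_pos n
  have hvol : volume S ≤ ENNReal.ofReal (r ^ n * unitBallVolume n) :=
    volume_ball_eq z hr ▸ measure_mono hball
  have hr_exp : (r ^ n) ^ (1 / (n : ℝ) - 1 / q) = r ^ (1 - n / q) := by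
    rw [← Real.rpow_natCast_mul hr]
    congr 1
    field_simp
  refine lnBound_of_eLpNorm'_le hn ?_
  calc eLpNorm' g n (volume.restrict S)
      ≤ eLpNorm' g q (volume.restrict S) * volume S ^ (1 / (n : ℝ) - 1 / q) := by
        simpa only [Measure.restrict_apply_univ] using
          eLpNorm'_le_eLpNorm'_mul_rpow_measure_univ hn0 hq hg.aestronglyMeasurable
    _ ≤ ENNReal.ofReal K *
          ENNReal.ofReal (r ^ n * unitBallVolume n) ^ (1 / (n : ℝ) - 1 / q) := by
        gcongr
        refine le_trans ?_ (LpNormE_eq_eLpNorm' (D := D) hq0 ▸ hL)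
        exact eLpNorm'_mono_measure g (Measure.restrict_mono_set volume hSD) hq0.le
    _ = _ := by
        rw [ENNReal.ofReal_rpow_of_nonneg (by positivity) hexp, ← ENNReal.ofReal_mul hK,
          Real.mul_rpow (by positivity) hω.le, hr_exp, mul_assoc, mul_comm (r ^ _)]

end Hoelder

section HarnackChains

open MeasureTheory Metric Set

variable {n : ℕ} {k : Fin n} {lam Lam α Kb d₀ F κ h : ℝ} {u : EuclideanSpace ℝ (Fin n) → ℝ}
  {x y : EuclideanSpace ℝ (Fin n)} {X : ℕ → EuclideanSpace ℝ (Fin n)} {J N : ℕ}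

/-- The half-ball `{|x| < R, x_k > 0}` with an arbitrary coordinate `x_k` as the height. -/
def upperHalfBall (k : Fin n) (R : ℝ) : Set (EuclideanSpace ℝ (Fin n)) := {x | ‖x‖ < R ∧ 0 < x k}

/-- `u` is a nonnegative supersolution on the half-ball of radius `2`, whose coefficients obey the
scaling that Hölder's inequality gives: on subsets of a ball of radius `r` the drift has norm at
most `Kb * r ^ α`, and the right-hand side norm at most `F`, improved to `F * r ^ α` on subsets of
the strip `x_k < d₀`. -/
structure HalfBallSupersolution (k : Fin n) (lam Lam α Kb d₀ F : ℝ)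
    (u : EuclideanSpace ℝ (Fin n) → ℝ) : Prop where
  rhs_nonneg : 0 ≤ F
  isSupersolution : ∀ (D : Set (EuclideanSpace ℝ (Fin n))) (z : EuclideanSpace ℝ (Fin n)) (r : ℝ),
    IsOpen D → D ⊆ upperHalfBall k 2 → 0 ≤ r → D ⊆ ball z r →
    IsSupersolution lam Lam (Kb * r ^ α) F D u
  isSupersolution_strip : ∀ (D : Set (EuclideanSpace ℝ (Fin n)))
    (z : EuclideanSpace ℝ (Fin n)) (r : ℝ), IsOpen D → D ⊆ upperHalfBall k 2 →
    (∀ x ∈ D, x k < d₀) → 0 ≤ r → D ⊆ ball z r →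
    IsSupersolution lam Lam (Kb * r ^ α) (F * r ^ α) D u

theorem isOpen_upperHalfBall (k : Fin n) (R : ℝ) : IsOpen (upperHalfBall k R) :=
  (isOpen_lt continuous_norm continuous_const).inter
    (isOpen_Ioi.preimage (PiLp.continuous_apply 2 _ k))

theorem HalfBallSupersolution.nonneg (hu : HalfBallSupersolution k lam Lam α Kb d₀ F u)
    (hx : x ∈ upperHalfBall k 2) : 0 ≤ u x :=
  (hu.isSupersolution _ 0 2 (isOpen_upperHalfBall k 2) subset_rfl zero_le_two
    fun _ hy => mem_ball_zero_iff.2 hy.1).nonneg x hx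

theorem abs_apply_sub_apply_le_dist (k : Fin n) (x y : EuclideanSpace ℝ (Fin n)) :
    |x k - y k| ≤ dist x y := by
  rw [dist_eq_norm]
  exact PiLp.norm_apply_le (x - y) k

theorem apply_le_norm (k : Fin n) (x : EuclideanSpace ℝ (Fin n)) : x k ≤ ‖x‖ :=
  (le_abs_self _).trans (PiLp.norm_apply_le x k)

theorem ball_subset_upperHalfBall {r R : ℝ} (hR : ‖x‖ + r ≤ R) (hr : r ≤ x k) :
    ball x r ⊆ upperHalfBall k R := by
  intro y hy
  have hyx : ‖y‖ ≤ dist y x + ‖x‖ := by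
    rw [dist_eq_norm]
    exact norm_le_norm_sub_add y x
  have hk := (abs_le.1 (abs_apply_sub_apply_le_dist k y x)).1
  exact ⟨by linarith [mem_ball.1 hy], by linarith [mem_ball.1 hy]⟩

theorem exists_forall_mul_rpow_le {δ : ℝ} (Kb : ℝ) (hα : 0 < α) (hδ : 0 < δ) :
    ∃ s > 0, ∀ r, 0 ≤ r → r ≤ s → Kb * r ^ α ≤ δ := by
  have hlim : Filter.Tendsto (fun r : ℝ => Kb * r ^ α) (nhds 0) (nhds 0) :=
    (continuous_const.mul (Real.continuous_rpow_const hα.le)).tendsto' 0 0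
      (by simp [Real.zero_rpow hα.ne'])
  obtain ⟨s, hs, hball⟩ := Metric.eventually_nhds_iff.1 (hlim.eventually (eventually_le_nhds hδ))
  refine ⟨s / 2, by positivity, fun r hr hrs => hball ?_⟩
  rw [Real.dist_0_eq_abs, abs_of_nonneg hr]
  linarith

theorem exists_forall_mul_sub_le (n : ℕ) [NeZero n] (hlam : 0 < lam) (hLam : lam ≤ Lam) :
    ∃ c δ C : ℝ, 0 < c ∧ c ≤ 1 / 2 ∧ 0 < δ ∧ 0 < C ∧ ∀ (u : EuclideanSpace ℝ (Fin n) → ℝ)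
      (z : EuclideanSpace ℝ (Fin n)) (R t γ : ℝ), 0 < R → 0 ≤ t → 0 ≤ γ →
      IsSupersolution lam Lam δ γ (ball z R) u → (∀ x ∈ ball z (R / 64), t ≤ u x) →
      ∀ x ∈ ball z (R / 2), c * t - C * R * γ ≤ u x := by
  have hκ := abpConst_pos n hlam
  obtain ⟨m, hm⟩ := exists_nat_ge (Lam * n * 4096 / (2 * lam))
  rw [div_le_iff₀ (by positivity)] at hm
  refine ⟨(3 / 4) ^ (m + 2) / 2, (3 / 4) ^ (m + 2) * abpConst n lam / (8 * (m + 2)),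
    2 / abpConst n lam, by positivity, ?_, by positivity, by positivity,
    fun u z R t γ hR ht hγ h hu => h.le_of_le_on_ball hlam hLam (by linarith) hR ht hγ hu⟩
  gcongr
  exact pow_le_one₀ (by norm_num) (by norm_num)

/-- A chain of `N` steps in `{|x| < 7/4, x_k > 0}`, each of length at most `κ` times the height. -/
structure IsHarnackChain (k : Fin n) (κ : ℝ) (N : ℕ) (X : ℕ → EuclideanSpace ℝ (Fin n)) :
    Prop where
  norm_lt : ∀ i ≤ N, ‖X i‖ < 7 / 4
  pos : ∀ i ≤ N, 0 < X i k
  dist_le : ∀ i < N, dist (X (i + 1)) (X i) ≤ κ * X i k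

theorem exists_harnack_step (k : Fin n) (Kb : ℝ) (hlam : 0 < lam) (hLam : lam ≤ Lam)
    (hα : 0 < α) :
    ∃ κ₀ c C : ℝ, 0 < κ₀ ∧ κ₀ ≤ 1 / 512 ∧ 0 < c ∧ c ≤ 1 / 2 ∧ 0 < C ∧ ∀ (d₀ F : ℝ)
      (u : EuclideanSpace ℝ (Fin n) → ℝ), HalfBallSupersolution k lam Lam α Kb d₀ F u →
      ∀ (κ s : ℝ) (x y : EuclideanSpace ℝ (Fin n)), 0 < κ → κ ≤ κ₀ → 0 ≤ s →
      ‖x‖ < 7 / 4 → 0 < x k → dist y x ≤ κ * x k →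
      (∀ w ∈ ball x (κ * x k), s - C * F ≤ u w) →
      ∀ w ∈ ball y (κ * y k), c * s - C * F ≤ u w := by
  have : NeZero n := .of_pos k.pos
  obtain ⟨c, δ, C, hc, hc1, hδ, hC, hdouble⟩ := exists_forall_mul_sub_le n hlam hLam
  obtain ⟨r₀, hr₀, hsmall⟩ := exists_forall_mul_rpow_le Kb hα hδ
  refine ⟨min (1 / 512) (r₀ / 128), c, 2 * C, by positivity, min_le_left _ _, hc, hc1,
    by positivity, fun d₀ F u h κ s x y hκ hκ₀ hs hx hxk hxy hu w hw => ?_⟩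
  obtain ⟨hκ1, hκr⟩ := le_min_iff.1 hκ₀
  have hF := h.rhs_nonneg
  have hx2 : x k ≤ 2 := by linarith [apply_le_norm k x]
  have hκx0 : 0 < κ * x k := by positivity
  have hκx : κ * x k ≤ 1 / 512 * x k := by gcongr
  have hyk : y k ≤ 2 * x k := by
    linarith [(abs_le.1 (abs_apply_sub_apply_le_dist k y x)).2]
  have hκy : κ * y k ≤ κ * (2 * x k) := by gcongr
  have hdom : ball x (64 * κ * x k) ⊆ upperHalfBall k 2 :=
    ball_subset_upperHalfBall (by linarith) (by linarith)
  have hsuper := h.isSupersolution _ x (64 * κ * x k) isOpen_ball hdom (by positivity) subset_rfl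
  have hwx : w ∈ ball x (64 * κ * x k / 2) := by
    rw [mem_ball] at hw ⊢
    linarith [dist_triangle w y x]
  rcases le_total s (2 * C * F) with hsF | hsF
  · have : c * s ≤ 1 * s := by gcongr; linarith
    linarith [hsuper.nonneg w (ball_subset_ball (by linarith) hwx)]
  · have hle := hdouble u x (64 * κ * x k) (s - 2 * C * F) F (by positivity) (by linarith) hF
      (hsuper.mono isOpen_ball subset_rfl (hsmall _ (by positivity) (by nlinarith)) le_rfl)
      (fun v hv => hu v (by convert hv using 2; ring)) w hwx
    have hC1 : C * (64 * κ * x k) * F ≤ C * 1 * F := by gcongr; linarith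
    have hcC : c * (2 * C * F) ≤ 1 / 2 * (2 * C * F) := by gcongr
    linarith

theorem exists_harnack_chain (k : Fin n) (Kb : ℝ) (hlam : 0 < lam) (hLam : lam ≤ Lam)
    (hα : 0 < α) :
    ∃ κ₀ c C : ℝ, 0 < κ₀ ∧ κ₀ ≤ 1 / 512 ∧ 0 < c ∧ 0 < C ∧ ∀ (d₀ F : ℝ)
      (u : EuclideanSpace ℝ (Fin n) → ℝ), HalfBallSupersolution k lam Lam α Kb d₀ F u →
      ∀ (κ s : ℝ) (N : ℕ) (X : ℕ → EuclideanSpace ℝ (Fin n)), 0 < κ → κ ≤ κ₀ → 0 ≤ s →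
      IsHarnackChain k κ N X → (∀ w ∈ ball (X 0) (κ * X 0 k), s - C * F ≤ u w) →
      ∀ w ∈ ball (X N) (κ * X N k), c ^ N * s - C * F ≤ u w := by
  obtain ⟨κ₀, c, C, hκ₀, hκ₀1, hc, -, hC, hstep⟩ := exists_harnack_step k Kb hlam hLam hα
  refine ⟨κ₀, c, C, hκ₀, hκ₀1, hc, hC,
    fun d₀ F u h κ s N X hκ hκκ₀ hs hX hu => ?_⟩
  have hchain : ∀ i ≤ N, ∀ w ∈ ball (X i) (κ * X i k), c ^ i * s - C * F ≤ u w := by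
    intro i
    induction i with
    | zero => simpa using hu
    | succ i ih =>
      intro hi
      rw [pow_succ', mul_assoc]
      exact hstep d₀ F u h κ (c ^ i * s) (X i) (X (i + 1)) hκ hκκ₀ (by positivity)
        (hX.norm_lt i (by omega)) (hX.pos i (by omega)) (hX.dist_le i (by omega)) (ih (by omega))
  exact hchain N le_rfl

theorem exists_isHarnackChain_vertical (hκ : 0 < κ) (hκ1 : κ ≤ 1) (hx : ‖x‖ < 3 / 2)
    (hxk : 0 < x k) :
    ∃ J X, IsHarnackChain k κ J X ∧ X 0 = x ∧ 1 / 8 ≤ X J k ∧ (1 + κ) ^ J * x k ≤ 2 := by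
  classical
  have hex : ∃ j : ℕ, 1 / 8 ≤ (1 + κ) ^ j * x k := by
    obtain ⟨j, hj⟩ := pow_unbounded_of_one_lt (1 / 8 / x k) (by linarith : 1 < 1 + κ)
    exact ⟨j, ((div_lt_iff₀ hxk).1 hj).le⟩
  have hone (i : ℕ) : 1 ≤ (1 + κ) ^ i := one_le_pow₀ (by linarith)
  have hpos (i : ℕ) : 0 < (1 + κ) ^ i * x k := by positivity
  have hlow (i : ℕ) (hi : i < Nat.find hex) : (1 + κ) ^ i * x k < 1 / 8 :=
    not_le.1 (Nat.find_min hex hi)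
  have hheight (i : ℕ) (hi : i ≤ Nat.find hex) : (1 + κ) ^ i * x k ≤ x k + 1 / 4 := by
    rcases i with _ | i
    · linarith
    · rw [pow_succ]
      nlinarith [hlow i (by omega), hpos i]
  set e : EuclideanSpace ℝ (Fin n) := EuclideanSpace.single k 1
  have hnorm : ‖e‖ = 1 := by simp [e]
  set X : ℕ → EuclideanSpace ℝ (Fin n) := fun i => x + (((1 + κ) ^ i - 1) * x k) • e with hX
  have hXk (i : ℕ) : X i k = (1 + κ) ^ i * x k := by
    simp [hX, e]
    ring
  refine ⟨Nat.find hex, X, ⟨fun i hi => ?_, fun i _ => hXk i ▸ hpos i, fun i _ => ?_⟩, by simp [hX],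
    hXk _ ▸ Nat.find_spec hex, (hheight _ le_rfl).trans (by linarith [apply_le_norm k x])⟩
  · calc ‖X i‖ ≤ ‖x‖ + ((1 + κ) ^ i - 1) * x k := by
          refine (norm_add_le _ _).trans_eq ?_
          rw [norm_smul, hnorm, mul_one, Real.norm_of_nonneg
            (mul_nonneg (sub_nonneg.2 (hone i)) hxk.le)]
      _ < 7 / 4 := by linarith [hheight i hi]
  · have hdiff : X (i + 1) - X i = (κ * ((1 + κ) ^ i * x k)) • e := by
      simp only [hX, pow_succ]
      module
    rw [dist_eq_norm, hdiff, norm_smul, hnorm, mul_one, hXk, Real.norm_of_nonneg]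
    exact mul_nonneg hκ.le (hpos i).le

theorem exists_isHarnackChain_segment (hh : 0 < h) (hN0 : N ≠ 0) (hN : 4 ≤ κ * h * N)
    (hκ : 0 < κ) (hx : ‖x‖ < 7 / 4) (hxk : h ≤ x k) (hy : ‖y‖ < 7 / 4) (hyk : h ≤ y k) :
    ∃ X, IsHarnackChain k κ N X ∧ X 0 = x ∧ X N = y := by
  have hN0 : (0 : ℝ) < N := Nat.cast_pos.2 (Nat.pos_of_ne_zero hN0)
  set X : ℕ → EuclideanSpace ℝ (Fin n) := fun i => x + ((i : ℝ) / N) • (y - x) with hX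
  have hI (i : ℕ) (hi : i ≤ N) : (i : ℝ) / N ∈ Icc 0 1 :=
    ⟨by positivity, (div_le_one hN0).2 (Nat.cast_le.2 hi)⟩
  have hXk (i : ℕ) (hi : i ≤ N) : h ≤ X i k :=
    (convex_Ici h).add_smul_sub_mem hxk hyk (hI i hi)
  refine ⟨X, ⟨fun i hi => ?_, fun i hi => hh.trans_le (hXk i hi), fun i hi => ?_⟩, by simp [hX],
    by simp [hX, div_self hN0.ne']⟩
  · exact mem_ball_zero_iff.1 ((convex_ball 0 (7 / 4)).add_smul_sub_mem
      (mem_ball_zero_iff.2 hx) (mem_ball_zero_iff.2 hy) (hI i hi))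
  · have hdiff : X (i + 1) - X i = (1 / (N : ℝ)) • (y - x) := by
      simp only [hX]
      push_cast
      module
    rw [dist_eq_norm, hdiff, norm_smul, Real.norm_of_nonneg (by positivity)]
    calc 1 / (N : ℝ) * ‖y - x‖ ≤ 1 / (N : ℝ) * (κ * h * N) := by
          gcongr
          linarith [norm_sub_le y x]
      _ = κ * h := by field_simp
      _ ≤ κ * X i k := by gcongr; exact hXk i hi.le

theorem exists_pow_mul_sub_le (k : Fin n) (Kb : ℝ) (hlam : 0 < lam) (hLam : lam ≤ Lam)
    (hα : 0 < α) :
    ∃ κ₀ C : ℝ, 0 < κ₀ ∧ κ₀ ≤ 1 / 512 ∧ 0 < C ∧ ∀ κ, 0 < κ → κ ≤ κ₀ → ∃ m : ℕ,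
      ∀ h, 0 < h → h ≤ 1 / 8 → ∃ c > 0, ∀ (d₀ F : ℝ) (u : EuclideanSpace ℝ (Fin n) → ℝ),
      HalfBallSupersolution k lam Lam α Kb d₀ F u → ∀ (x : EuclideanSpace ℝ (Fin n)) (t : ℝ),
      ‖x‖ < 3 / 2 → 0 < x k → 0 ≤ t → (∀ w ∈ ball x (κ * x k), t ≤ u w) →
      ∀ y : EuclideanSpace ℝ (Fin n), ‖y‖ < 7 / 4 → h ≤ y k → c * x k ^ m * t - C * F ≤ u y := by
  obtain ⟨κ₀, c, C, hκ₀, hκ₀1, hc, hC, hchain⟩ := exists_harnack_chain k Kb hlam hLam hα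
  refine ⟨κ₀, C, hκ₀, hκ₀1, hC, fun κ hκ hκκ₀ => ?_⟩
  obtain ⟨m, hm⟩ := exists_pow_lt_of_lt_one hc
    (inv_lt_one_of_one_lt₀ (by linarith : 1 < 1 + κ))
  refine ⟨m, fun h hh hh1 => ?_⟩
  obtain ⟨N, hN⟩ := exists_nat_gt (4 / (κ * h))
  have hN0 : N ≠ 0 := by
    rintro rfl
    exact hN.not_ge (by simpa using (by positivity : 0 ≤ 4 / (κ * h)))
  rw [div_lt_iff₀' (by positivity)] at hN
  refine ⟨c ^ N / 2 ^ m, by positivity, fun d₀ F u hu x t hx hxk ht hut y hy hyk => ?_⟩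
  obtain ⟨J, X, hX, rfl, hXJ, hJ⟩ := exists_isHarnackChain_vertical hκ (by linarith) hx hxk
  obtain ⟨Y, hY, hY0, rfl⟩ := exists_isHarnackChain_segment hh hN0 hN.le hκ
    (hX.norm_lt J le_rfl) (hh1.trans hXJ) hy hyk
  have hCF : 0 ≤ C * F := mul_nonneg hC.le hu.rhs_nonneg
  have hvertical := hchain d₀ F u hu κ t J X hκ hκκ₀ ht hX fun w hw => by linarith [hut w hw]
  have hend := hchain d₀ F u hu κ (c ^ J * t) N Y hκ hκκ₀ (by positivity) hY (hY0 ▸ hvertical)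
    (Y N) (mem_ball_self (mul_pos hκ (hh.trans_le hyk)))
  have hcJ : (X 0 k / 2) ^ m ≤ c ^ J := by
    have hhalf : X 0 k / 2 ≤ ((1 + κ)⁻¹) ^ J := by
      rw [inv_pow, ← one_div, le_div_iff₀ (by positivity)]
      linarith
    calc (X 0 k / 2) ^ m ≤ (((1 + κ)⁻¹) ^ J) ^ m := by gcongr
      _ = (((1 + κ)⁻¹) ^ m) ^ J := pow_right_comm _ _ _
      _ ≤ c ^ J := by gcongr
  calc c ^ N / 2 ^ m * X 0 k ^ m * t - C * F = c ^ N * ((X 0 k / 2) ^ m * t) - C * F := by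
        rw [div_pow]
        ring
    _ ≤ c ^ N * (c ^ J * t) - C * F := by gcongr
    _ ≤ u (Y N) := hend

end HarnackChains

section SlabBarriers

open Metric Set

variable {n : ℕ} {k : Fin n} {lam Lam β γ P c₁ c₂ ρ H L R : ℝ} {x y z : EuclideanSpace ℝ (Fin n)}
  {u ψ : EuclideanSpace ℝ (Fin n) → ℝ}

/-- The part of the ball `B_ρ(z)` in the slab `0 < y_k < H`. -/
def ballSlab (k : Fin n) (z : EuclideanSpace ℝ (Fin n)) (ρ H : ℝ) :
    Set (EuclideanSpace ℝ (Fin n)) := {y | ‖y - z‖ < ρ ∧ 0 < y k ∧ y k < H}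

theorem isOpen_ballSlab (k : Fin n) (z : EuclideanSpace ℝ (Fin n)) (ρ H : ℝ) :
    IsOpen (ballSlab k z ρ H) :=
  (isOpen_lt (f := fun y => ‖y - z‖) (by fun_prop) continuous_const).inter
    (isOpen_Ioo.preimage (PiLp.continuous_apply 2 _ k))

theorem ballSlab_subset_ball : ballSlab k z ρ H ⊆ ball z ρ := fun _ hy => mem_ball_iff_norm.2 hy.1

theorem ballSlab_subset_upperHalfBall (hR : ‖z‖ + ρ ≤ R) :
    ballSlab k z ρ H ⊆ upperHalfBall k R := fun y hy =>
  ⟨by linarith [norm_le_norm_sub_add y z, hy.1], hy.2.1⟩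

/-- The quadratic barrier `-P |y - z|² + c₁ y_k + c₂ y_k²` for slabs: its convexity in `y_k` makes
up for its concavity in the other directions. -/
noncomputable def slabBarrier (k : Fin n) (z : EuclideanSpace ℝ (Fin n)) (P c₁ c₂ : ℝ)
    (y : EuclideanSpace ℝ (Fin n)) : ℝ := -P * ‖y - z‖ ^ 2 + (c₁ * y k + c₂ * y k ^ 2)

theorem contDiff_slabBarrier (k : Fin n) (z : EuclideanSpace ℝ (Fin n)) (P c₁ c₂ : ℝ) :
    ContDiff ℝ 2 (slabBarrier k z P c₁ c₂) :=
  (contDiff_radial (F := fun s => -P * s) (by fun_prop) z).add (contDiff_coordQuadratic k c₁ c₂)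

theorem gradNorm_slabBarrier_le (hP : 0 ≤ P) :
    gradNorm n (slabBarrier k z P c₁ c₂) x ≤ 2 * P * ‖x - z‖ + |c₁ + 2 * c₂ * x k| := by
  have hF : HasDerivAt (fun s => -P * s) (-P) (‖x - z‖ ^ 2) := by
    simpa using (hasDerivAt_id _).const_mul (-P)
  have hsum := (hasFDerivAt_radial hF).differentiableAt
  have hcoord := (hasFDerivAt_coordQuadratic k c₁ c₂ x).differentiableAt
  have hradial := gradNorm_radial hF
  rw [abs_neg, abs_of_nonneg hP] at hradial
  calc gradNorm n (slabBarrier k z P c₁ c₂) x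
      ≤ gradNorm n (fun y => -P * ‖y - z‖ ^ 2) x
          + gradNorm n (fun y => c₁ * y k + c₂ * y k ^ 2) x :=
        (congrArg norm (fderiv_fun_add hsum hcoord)).trans_le (norm_add_le _ _)
    _ ≤ _ := add_le_add hradial.le (gradNorm_coordQuadratic_le k c₁ c₂ x)

theorem pucciMinus_hess_slabBarrier_nonneg (hLam : lam ≤ Lam) (hP : 0 ≤ P) (hc₂ : 0 ≤ c₂)
    (hPc : P * (Lam * n) ≤ c₂ * lam) :
    0 ≤ pucciMinus n lam Lam (hess n (slabBarrier k z P c₁ c₂) x) := by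
  have hsmooth : ContDiff ℝ 2 fun y => -P * ‖y - z‖ ^ 2 :=
    contDiff_radial (F := fun s => -P * s) (by fun_prop) z
  have hradial := hsmooth.contDiffAt (x := x)
  have hcoord := (contDiff_coordQuadratic k c₁ c₂).contDiffAt (x := x)
  have hsum := hess_add hradial hcoord
  have hle := pucciMinus_add_le hLam (isHermitian_hess hradial) (isHermitian_hess hcoord)
  have hradial_le := le_pucciMinus_hess_radial (F := fun s => -P * s) (F' := fun _ => -P)
    (z := z) (x := x) hLam (fun s => by simpa using (hasDerivAt_id s).const_mul (-P))
    (hasDerivAt_const _ _) (neg_nonpos.2 hP) le_rfl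
  rw [← hsum] at hle
  refine le_trans ?_ hle
  linarith [le_pucciMinus_hess_coordQuadratic (x := x) hLam k c₁ hc₂]

/-- On the face `y_k = 0` the barrier is nonpositive, so it has to be compared with `u` on the rest
of the boundary of the slab only. -/
theorem IsSupersolution.slabBarrier_le_add (hlam : 0 < lam) (hLam : lam ≤ Lam)
    (h : IsSupersolution lam Lam β γ (ballSlab k z ρ H) u) (hβ : 0 ≤ β)
    (hβκ : β ≤ abpConst n lam) (hγ : 0 ≤ γ) (hρ : 0 < ρ) (hP : 0 ≤ P) (hc₂ : 0 ≤ c₂)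
    (hPc : P * (Lam * n) ≤ c₂ * lam) (hψ : Continuous ψ) (hψu : ∀ y ∈ ballSlab k z ρ H, ψ y ≤ u y)
    (hbd : ∀ y, ‖y - z‖ ≤ ρ → 0 ≤ y k → y k ≤ H → ‖y - z‖ = ρ ∨ y k = H →
      slabBarrier k z P c₁ c₂ y ≤ max 0 (ψ y)) (hL : 0 ≤ L)
    (hgrad : ∀ y ∈ ballSlab k z ρ H, 2 * P * ρ + |c₁ + 2 * c₂ * y k| ≤ L) :
    ∀ y ∈ ballSlab k z ρ H,
      slabBarrier k z P c₁ c₂ y ≤ u y + 2 * ρ * (γ + L * β) / abpConst n lam := by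
  have : NeZero n := .of_pos k.pos
  have hcont := contDiff_slabBarrier k z P c₁ c₂
  refine h.le_add_of_boundaryLE hlam hLam hβ hβκ hγ hcont.contDiffOn (by positivity)
    (fun x hx y hy => ?_) hL ?_ fun y hy _ => ⟨(gradNorm_slabBarrier_le hP).trans (le_trans ?_
      (hgrad y hy)), pucciMinus_hess_slabBarrier_nonneg hLam hP hc₂ hPc⟩
  · linarith [norm_sub_le_norm_sub_add_norm_sub x z y, norm_sub_rev z y, hx.1, hy.1]
  · refine boundaryLE_of_le_on_sdiff (C := closedBall z ρ ∩ {y | y k ∈ Icc 0 H})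
      ((isCompact_closedBall z ρ).inter_right (isClosed_Icc.preimage (by fun_prop)))
      (fun y hy => ⟨ball_subset_closedBall (ballSlab_subset_ball hy), hy.2.1.le, hy.2.2.le⟩)
      hcont.continuous (continuous_const.max hψ) (fun y hy => max_le (h.nonneg y hy) (hψu y hy))
      fun y hy => ?_
    obtain ⟨⟨hyρ, hy0, hyH⟩, hynot⟩ := hy
    rw [mem_closedBall_iff_norm] at hyρ
    rcases hy0.eq_or_lt with hy0 | hypos
    · refine le_max_of_le_left ?_
      simp only [slabBarrier, ← hy0]
      nlinarith [mul_nonneg hP (sq_nonneg ‖y - z‖)]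
    · refine hbd y hyρ hy0 hyH ?_
      by_contra! hne
      exact hynot ⟨hyρ.lt_of_ne hne.1, hypos, hyH.lt_of_ne hne.2⟩
  · have := hy.1.le
    gcongr

/-- The orthogonal projection onto the hyperplane `x_k = 0`. -/
noncomputable def flatProj (k : Fin n) (x : EuclideanSpace ℝ (Fin n)) :
    EuclideanSpace ℝ (Fin n) := x - x k • EuclideanSpace.single k 1

theorem flatProj_apply_self (k : Fin n) (x : EuclideanSpace ℝ (Fin n)) : flatProj k x k = 0 := by
  simp [flatProj]

theorem norm_sub_flatProj (hx : 0 ≤ x k) : ‖x - flatProj k x‖ = x k := by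
  simp [flatProj, norm_smul, abs_of_nonneg hx]

theorem norm_flatProj_sub_le (hz : z k = 0) : ‖flatProj k x - z‖ ≤ ‖x - z‖ := by
  rw [EuclideanSpace.norm_eq, EuclideanSpace.norm_eq]
  gcongr with i
  by_cases hi : i = k
  · subst hi
    simp [flatProj, hz]
  · simp [flatProj, hi]

theorem norm_flatProj_le (k : Fin n) (x : EuclideanSpace ℝ (Fin n)) : ‖flatProj k x‖ ≤ ‖x‖ := by
  simpa using norm_flatProj_sub_le (k := k) (x := x) (z := 0) rfl

theorem apply_le_norm_sub (hz : z k = 0) : x k ≤ ‖x - z‖ := by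
  simpa [hz] using apply_le_norm k (x - z)

theorem mem_ballSlab_flatProj (hx : 0 < x k) (hρ : x k < ρ) (hH : x k < H) :
    x ∈ ballSlab k (flatProj k x) ρ H :=
  ⟨by rwa [norm_sub_flatProj hx.le], hx, hH⟩

theorem slabBarrier_flatProj_apply (hx : 0 ≤ x k) :
    slabBarrier k (flatProj k x) P c₁ c₂ x = c₁ * x k + (c₂ - P) * x k ^ 2 := by
  rw [slabBarrier, norm_sub_flatProj hx]
  ring

end SlabBarriers

section BoundaryGrowth

open Metric Set

variable {n : ℕ} {k : Fin n} {lam Lam α Kb d₀ F A B H a r ρ σ θ θ' : ℝ}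
  {x y z : EuclideanSpace ℝ (Fin n)} {u : EuclideanSpace ℝ (Fin n) → ℝ}

theorem HalfBallSupersolution.isSupersolution_ballSlab
    (h : HalfBallSupersolution k lam Lam α Kb d₀ F u) (hz : ‖z‖ + ρ ≤ 2) (hρ : 0 ≤ ρ)
    (hH : H ≤ d₀) : IsSupersolution lam Lam (Kb * ρ ^ α) (F * ρ ^ α) (ballSlab k z ρ H) u :=
  h.isSupersolution_strip _ z ρ (isOpen_ballSlab k z ρ H) (ballSlab_subset_upperHalfBall hz)
    (fun _ hy => hy.2.2.trans_le hH) hρ ballSlab_subset_ball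

theorem slabBarrier_le_max_of_height_le (hA : 0 ≤ A) (hH : 0 < H) (hHρ : 2 * H ≤ ρ)
    (hy0 : 0 ≤ y k) (hyH : y k ≤ H) (hy : ‖y - z‖ = ρ ∨ y k = H) :
    slabBarrier k z (A / ρ) A (A / H) y ≤ max 0 (2 * A * (2 * y k - H)) := by
  have hρ : 0 < ρ := by linarith
  have hsq : A / H * y k ^ 2 ≤ A * y k := by
    rw [div_mul_eq_mul_div, div_le_iff₀ hH, sq, ← mul_assoc]
    gcongr
  have hAy : A * y k ≤ A * H := by gcongr
  have hradial : 0 ≤ A / ρ * ‖y - z‖ ^ 2 := by positivity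
  unfold slabBarrier
  rcases hy with hyρ | hyH
  · have hside : A / ρ * ‖y - z‖ ^ 2 = A * ρ := by
      rw [hyρ]
      field_simp
    exact le_max_of_le_left (by linarith [mul_le_mul_of_nonneg_left hHρ hA])
  · exact le_max_of_le_right (by rw [hyH] at hsq hAy ⊢; linarith)

/-- If `u ≥ 2 A H` at heights above `H / 2`, then a quadratic barrier vanishing on the flat boundary
gives linear growth with slope `A`, up to the error of the maximum principle. -/
theorem HalfBallSupersolution.mul_apply_sub_le_of_le_above (hlam : 0 < lam) (hLam : lam ≤ Lam)
    (hKb : 0 ≤ Kb) (h : HalfBallSupersolution k lam Lam α Kb d₀ F u) (hA : 0 ≤ A) (hH : 0 < H)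
    (hHρ : 2 * H ≤ ρ) (hHlam : H * (Lam * n) ≤ lam * ρ) (hHd : H ≤ d₀)
    (hρκ : Kb * ρ ^ α ≤ abpConst n lam) (hx : ‖flatProj k x‖ + ρ ≤ 7 / 4) (hx0 : 0 < x k)
    (hxH : x k < H)
    (hu : ∀ y : EuclideanSpace ℝ (Fin n), ‖y‖ < 7 / 4 → H / 2 ≤ y k → 2 * A * H ≤ u y) :
    A * x k - 2 * ρ * (F * ρ ^ α + 5 * A * (Kb * ρ ^ α)) / abpConst n lam ≤ u x := by
  have hρ : 0 < ρ := by linarith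
  have hF := h.rhs_nonneg
  have hslab := h.isSupersolution_ballSlab (H := H) (by linarith : ‖flatProj k x‖ + ρ ≤ 2) hρ.le hHd
  have hPc : A / ρ ≤ A / H := by gcongr; linarith
  have hbarrier := hslab.slabBarrier_le_add (P := A / ρ) (c₁ := A) (c₂ := A / H)
    (L := 5 * A) (ψ := fun y => 2 * A * (2 * y k - H)) hlam hLam (by positivity) hρκ (by positivity)
    hρ (by positivity) (by positivity) ?_ (by fun_prop) (fun y hy => ?_)
    (fun y _ => slabBarrier_le_max_of_height_le hA hH hHρ) (by positivity)
    (fun y ⟨_, hy0, hyH⟩ => ?_) x (mem_ballSlab_flatProj hx0 (by linarith) hxH)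
  · rw [slabBarrier_flatProj_apply hx0.le] at hbarrier
    linarith [mul_nonneg (sub_nonneg.2 hPc) (sq_nonneg (x k))]
  · rw [div_mul_eq_mul_div, div_mul_eq_mul_div, div_le_div_iff₀ hρ hH]
    linarith [mul_le_mul_of_nonneg_left hHlam hA]
  · rcases le_total (H / 2) (y k) with hyH | hyH
    · have hy2 : 2 * A * (2 * y k - H) ≤ 2 * A * H := by gcongr; linarith [hy.2.2]
      exact hy2.trans (hu y (by linarith [norm_le_norm_sub_add y (flatProj k x), hy.1]) hyH)
    · exact (mul_nonpos_of_nonneg_of_nonpos (by positivity) (by linarith)).trans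
        (hslab.nonneg y hy)
  · have hyA : A / H * y k ≤ A := by
      rw [div_mul_eq_mul_div, div_le_iff₀ hH]
      gcongr
    rw [abs_of_nonneg (by positivity), mul_assoc, div_mul_cancel₀ _ hρ.ne']
    linarith

/-- The linear lower bound `u ≥ a y_k - θ r` on the half-ball of radius `r` about `z`. -/
def LinearLowerBound (k : Fin n) (z : EuclideanSpace ℝ (Fin n)) (r a θ : ℝ)
    (u : EuclideanSpace ℝ (Fin n) → ℝ) : Prop :=
  ∀ y, ‖y - z‖ < r → 0 < y k → a * y k - θ * r ≤ u y

theorem LinearLowerBound.mono (h : LinearLowerBound k z r a θ u) {a' : ℝ} (ha : a' ≤ a) :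
    LinearLowerBound k z r a' θ u := fun y hyz hy => le_trans (by gcongr) (h y hyz hy)

theorem exists_linearLowerBound_of_le_above (k : Fin n) (hlam : 0 < lam) (hLam : lam ≤ Lam)
    (hα : 0 < α) (hKb : 0 ≤ Kb) (hd₀ : 0 < d₀) (hσ : 0 < σ) :
    ∃ H₀ τ : ℝ, 0 < H₀ ∧ 0 < τ ∧ ∀ H, 0 < H → H ≤ H₀ → ∀ (A F : ℝ)
      (u : EuclideanSpace ℝ (Fin n) → ℝ), 0 ≤ A → F ≤ τ * A →
      HalfBallSupersolution k lam Lam α Kb d₀ F u →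
      (∀ y : EuclideanSpace ℝ (Fin n), ‖y‖ < 7 / 4 → H / 2 ≤ y k → 2 * A * H ≤ u y) →
      ∀ z : EuclideanSpace ℝ (Fin n), z k = 0 → ‖z‖ ≤ 1 → LinearLowerBound k z H A (σ * A) u := by
  have hn : (1 : ℝ) ≤ n := by exact_mod_cast k.pos
  have hLam0 : 0 < Lam := hlam.trans_le hLam
  have hκ := abpConst_pos n hlam
  set μ := lam / (2 * (Lam * n)) with hμ
  have hμ0 : 0 < μ := by positivity
  have hμlam : μ * (Lam * n) = lam / 2 := by rw [hμ]; field_simp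
  have hμ2 : 2 * μ ≤ 1 := by nlinarith [mul_nonneg hμ0.le (by nlinarith : 0 ≤ Lam * n - lam)]
  obtain ⟨s, hs, hsmall⟩ := exists_forall_mul_rpow_le Kb hα
    (δ := min (abpConst n lam) (σ * μ * abpConst n lam / 20)) (by positivity)
  refine ⟨μ * min (min s (1 / 4)) d₀, σ * μ * abpConst n lam / 4, by positivity, by positivity,
    fun H hH hHle A F u hA hFA h hu z hz hz1 y hyz hy => ?_⟩
  obtain ⟨ρ, rfl⟩ : ∃ ρ, H = μ * ρ := ⟨H / μ, by field_simp⟩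
  have hρ : 0 < ρ := pos_of_mul_pos_right hH hμ0.le
  obtain ⟨⟨hρs, hρ4⟩, hρd⟩ := by simpa only [le_min_iff] using le_of_mul_le_mul_left hHle hμ0
  obtain ⟨hρκ, hρσ⟩ := le_min_iff.1 (hsmall ρ hρ.le hρs)
  have hμρ : 2 * (μ * ρ) ≤ ρ := by nlinarith
  have hproj : ‖flatProj k y‖ ≤ ‖y - z‖ + ‖z‖ := by
    linarith [norm_flatProj_sub_le (x := y) hz, norm_le_norm_sub_add (flatProj k y) z]
  refine le_trans ?_ (h.mul_apply_sub_le_of_le_above hlam hLam hKb hA hH hμρ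
    (by linarith [congrArg (ρ * ·) hμlam, mul_pos hlam hρ]) (by linarith) hρκ (by linarith) hy
    ((apply_le_norm_sub hz).trans_lt hyz) hu)
  have hρα : ρ ^ α ≤ 1 := Real.rpow_le_one hρ.le (by linarith) hα.le
  gcongr
  calc 2 * ρ * (F * ρ ^ α + 5 * A * (Kb * ρ ^ α)) / abpConst n lam
      ≤ 2 * ρ * (σ * μ * abpConst n lam / 4 * A * 1 + 5 * A * (σ * μ * abpConst n lam / 20))
          / abpConst n lam := by gcongr
    _ = σ * A * (μ * ρ) := by field_simp; ring

theorem slabBarrier_le_side (hρ : 0 < ρ) (hB : 0 ≤ B) (hθ : 0 ≤ θ) (hy : 0 ≤ y k) (hyρ : y k ≤ ρ)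
    (hyz : ‖y - z‖ = ρ) :
    slabBarrier k z (2 * θ / ρ) (a - 2 * θ * B) (2 * θ * B / ρ) y ≤ a * y k - θ * (2 * ρ) := by
  have hconvex : 0 ≤ 2 * θ * B / ρ * (y k * (ρ - y k)) := by
    have := sub_nonneg.2 hyρ
    positivity
  have hbarrier : slabBarrier k z (2 * θ / ρ) (a - 2 * θ * B) (2 * θ * B / ρ) y
      = a * y k - θ * (2 * ρ) - 2 * θ * B / ρ * (y k * (ρ - y k)) := by
    rw [slabBarrier, hyz]
    field_simp
    ring
  linarith

theorem abs_slabBarrier_slope_le {c t : ℝ} (hρ : 0 < ρ) (ha : 0 ≤ a) (hc : 0 ≤ c) (ht : 0 ≤ t)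
    (htρ : t ≤ ρ) : |a - c + 2 * (c / ρ) * t| ≤ a + c := by
  have hct : c / ρ * t ≤ c := by
    rw [div_mul_eq_mul_div, div_le_iff₀ hρ]
    gcongr
  have hct' : 0 ≤ c / ρ * t := by positivity
  exact abs_le.2 ⟨by linarith, by linarith⟩

/-- Halving the radius improves the additive error from `θ` to the error `θ'` of the maximum
principle, at the price of a small loss of slope. -/
theorem LinearLowerBound.half (hlam : 0 < lam) (hLam : lam ≤ Lam) (hB : 0 ≤ B)
    (hBlam : Lam * n ≤ B * lam) (hKb : 0 ≤ Kb) (h : HalfBallSupersolution k lam Lam α Kb d₀ F u)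
    (hρ : 0 < ρ) (hρd : 2 * ρ ≤ d₀) (hρκ : Kb * ρ ^ α ≤ abpConst n lam) (ha : 0 ≤ a) (hθ : 0 ≤ θ)
    (hz : z k = 0) (hzρ : ‖z‖ + 2 * ρ ≤ 2) (hu : LinearLowerBound k z (2 * ρ) a θ u)
    (herr : 2 * (F * ρ ^ α + (a + 2 * (2 + B) * θ) * (Kb * ρ ^ α)) ≤ θ' * abpConst n lam) :
    LinearLowerBound k z ρ (a - 2 * (1 + B) * θ) θ' u := by
  intro x hxz hx
  have hF := h.rhs_nonneg
  have hκ := abpConst_pos n hlam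
  have hxρ : x k < ρ := (apply_le_norm_sub hz).trans_lt hxz
  have hproj : ‖flatProj k x - z‖ < ρ := (norm_flatProj_sub_le hz).trans_lt hxz
  have hslab := h.isSupersolution_ballSlab (z := flatProj k x) (ρ := ρ) (H := 2 * ρ)
    (by linarith [norm_le_norm_sub_add (flatProj k x) z]) hρ.le hρd
  have hheight (y : EuclideanSpace ℝ (Fin n)) : y k ≤ ‖y - flatProj k x‖ :=
    apply_le_norm_sub (flatProj_apply_self k x)
  have hbarrier := hslab.slabBarrier_le_add (P := 2 * θ / ρ) (c₁ := a - 2 * θ * B)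
    (c₂ := 2 * θ * B / ρ) (L := a + 2 * (2 + B) * θ) (ψ := fun y => a * y k - θ * (2 * ρ))
    hlam hLam (by positivity) hρκ (by positivity) hρ (by positivity) (by positivity) ?_
    (by fun_prop) (fun y hy => hu y ?_ hy.2.1) (fun y hyρ hy0 _ hy => ?_) (by positivity)
    (fun y ⟨hyρ, hy0, _⟩ => ?_) x (mem_ballSlab_flatProj hx hxρ (by linarith))
  · rw [slabBarrier_flatProj_apply hx.le] at hbarrier
    have hP : 2 * θ / ρ * x k ^ 2 ≤ 2 * θ * x k := by
      rw [div_mul_eq_mul_div, div_le_iff₀ hρ, sq, ← mul_assoc]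
      gcongr
    have hconvex : 0 ≤ 2 * θ * B / ρ * x k ^ 2 := by positivity
    have herror : 2 * ρ * (F * ρ ^ α + (a + 2 * (2 + B) * θ) * (Kb * ρ ^ α)) / abpConst n lam
        ≤ θ' * ρ := by
      rw [div_le_iff₀ hκ]
      linarith [mul_le_mul_of_nonneg_left herr hρ.le]
    linarith
  · rw [div_mul_eq_mul_div, div_mul_eq_mul_div, mul_assoc _ B]
    gcongr
  · linarith [norm_sub_le_norm_sub_add_norm_sub y (flatProj k x) z, hy.1]
  · exact le_max_of_le_right (slabBarrier_le_side hρ hB hθ hy0 ((hheight y).trans hyρ)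
      (hy.resolve_right (by linarith [hheight y])))
  · have hslope := abs_slabBarrier_slope_le hρ ha (by positivity : 0 ≤ 2 * θ * B) hy0.le
      ((hheight y).trans hyρ.le)
    rw [mul_assoc 2, div_mul_cancel₀ _ hρ.ne']
    linarith

theorem exists_mul_half_pow_near {s : ℝ} (hs : 0 < s) (hsr : s < r) :
    ∃ m : ℕ, s < r * (1 / 2) ^ m ∧ r * (1 / 2) ^ m ≤ 2 * s := by
  have hr : 0 < r := hs.trans hsr
  obtain ⟨m, hm, hm'⟩ := Nat.exists_not_and_succ_of_not_zero_of_exists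
    (p := fun m => r * (1 / 2 : ℝ) ^ m ≤ s) (by simpa using hsr) (by
      obtain ⟨m, hm⟩ := exists_pow_lt_of_lt_one (div_pos hs hr) (by norm_num : (1 / 2 : ℝ) < 1)
      exact ⟨m, ((lt_div_iff₀' hr).1 hm).le⟩)
  rw [pow_succ] at hm'
  exact ⟨m, not_le.1 hm, by linarith⟩

theorem slope_add_error_le {s : ℝ} (hA : 0 ≤ A) (hB : 0 ≤ B) (hσ : 0 ≤ σ)
    (hBσ : 4 * (1 + B) * σ ≤ 1) (hs : 0 ≤ s) (hs1 : s ≤ 1) :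
    A / 2 * (1 + s) + 2 * (2 + B) * (σ * A * s) ≤ 2 * A := by
  have hσ1 : 2 * (2 + B) * σ ≤ 1 := by linarith [mul_nonneg hB hσ]
  calc A / 2 * (1 + s) + 2 * (2 + B) * (σ * A * s)
      = A / 2 * (1 + s) + 2 * (2 + B) * σ * A * s := by ring
    _ ≤ A / 2 * (1 + 1) + 1 * A * 1 := by gcongr
    _ = 2 * A := by ring

/-- The slope `A / 2 * (1 + q ^ m)` decreases to `A / 2`, where `q = 2⁻ᵅ`. -/
theorem LinearLowerBound.iterate (hlam : 0 < lam) (hLam : lam ≤ Lam) (hB : 0 ≤ B)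
    (hBlam : Lam * n ≤ B * lam) (hα : 0 < α) (hKb : 0 ≤ Kb) (hσ : 0 ≤ σ)
    (hσα : 4 * (1 + B) * σ ≤ 1 - (1 / 2) ^ α)
    (h : HalfBallSupersolution k lam Lam α Kb d₀ F u) (hr : 0 < r) (hrd : r ≤ d₀)
    (hrκ : Kb * r ^ α ≤ abpConst n lam) (hA : 0 ≤ A) (hz : z k = 0) (hzr : ‖z‖ + r ≤ 2)
    (herr : 2 * (F * r ^ α + 2 * A * (Kb * r ^ α)) ≤ σ * A * abpConst n lam)
    (hu : LinearLowerBound k z r A (σ * A) u) (m : ℕ) :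
    LinearLowerBound k z (r * (1 / 2) ^ m) (A / 2 * (1 + ((1 / 2) ^ α) ^ m))
      (σ * A * ((1 / 2) ^ α) ^ m) u := by
  set q : ℝ := (1 / 2) ^ α
  have hq0 : 0 < q := by positivity
  have hq1 : q < 1 := Real.rpow_lt_one (by norm_num) (by norm_num) hα
  induction m with
  | zero =>
    have hA2 : A / 2 * (1 + 1) = A := by ring
    simpa only [pow_zero, mul_one, hA2] using hu
  | succ m ih =>
    have hqm : q ^ m ≤ 1 := pow_le_one₀ hq0.le hq1.le
    have hrm : r * (1 / 2) ^ m = 2 * (r * (1 / 2) ^ (m + 1)) := by ring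
    have hrm_le : 2 * (r * (1 / 2) ^ (m + 1)) ≤ r := by
      rw [← hrm]
      exact mul_le_of_le_one_right hr.le (pow_le_one₀ (by norm_num) (by norm_num))
    have hscale : (r * (1 / 2) ^ (m + 1)) ^ α = r ^ α * q ^ (m + 1) := by
      rw [Real.mul_rpow hr.le (by positivity), ← Real.rpow_pow_comm (by norm_num)]
    have hslope := slope_add_error_le hA hB hσ (hσα.trans (by linarith)) (by positivity) hqm
    rw [hrm] at ih
    refine (ih.half (θ' := σ * A * q ^ (m + 1)) hlam hLam hB hBlam hKb h (by positivity)
      (hrm_le.trans hrd) ?_ (by positivity) (by positivity) hz (by linarith) ?_).mono ?_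
    · refine le_trans ?_ hrκ
      gcongr
      linarith [(by positivity : 0 < r * (1 / 2) ^ (m + 1))]
    · calc 2 * (F * (r * (1 / 2) ^ (m + 1)) ^ α
            + (A / 2 * (1 + q ^ m) + 2 * (2 + B) * (σ * A * q ^ m))
              * (Kb * (r * (1 / 2) ^ (m + 1)) ^ α))
          ≤ 2 * (F * (r ^ α * q ^ (m + 1)) + 2 * A * (Kb * (r ^ α * q ^ (m + 1)))) := by
            rw [hscale]
            gcongr
        _ = 2 * (F * r ^ α + 2 * A * (Kb * r ^ α)) * q ^ (m + 1) := by ring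
        _ ≤ σ * A * abpConst n lam * q ^ (m + 1) := by gcongr
        _ = σ * A * q ^ (m + 1) * abpConst n lam := by ring
    · rw [pow_succ]
      linarith [mul_le_mul_of_nonneg_right hσα (by positivity : 0 ≤ A / 2 * q ^ m)]

theorem exists_mul_apply_le_of_linearLowerBound (k : Fin n) (hlam : 0 < lam) (hLam : lam ≤ Lam)
    (hα : 0 < α) (hKb : 0 ≤ Kb) (hd₀ : 0 < d₀) :
    ∃ σ r₀ τ : ℝ, 0 < σ ∧ 0 < r₀ ∧ 0 < τ ∧ ∀ r, 0 < r → r ≤ r₀ → ∀ (A F : ℝ)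
      (u : EuclideanSpace ℝ (Fin n) → ℝ), 0 ≤ A → F ≤ τ * A →
      HalfBallSupersolution k lam Lam α Kb d₀ F u → ∀ x : EuclideanSpace ℝ (Fin n), ‖x‖ ≤ 1 →
      0 < x k → x k < r → LinearLowerBound k (flatProj k x) r A (σ * A) u →
      A / 4 * x k ≤ u x := by
  have hκ := abpConst_pos n hlam
  have hLam0 : 0 < Lam := hlam.trans_le hLam
  set B := Lam * n / lam
  have hBlam : Lam * n ≤ B * lam := (div_mul_cancel₀ _ hlam.ne').ge
  have hq1 : (1 / 2 : ℝ) ^ α < 1 := Real.rpow_lt_one (by norm_num) (by norm_num) hα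
  set σ := min (1 / 8) ((1 - (1 / 2 : ℝ) ^ α) / (4 * (1 + B)))
  have hσ : 0 < σ := lt_min (by norm_num) (div_pos (sub_pos.2 hq1) (by positivity))
  have hσα : 4 * (1 + B) * σ ≤ 1 - (1 / 2) ^ α :=
    (le_div_iff₀' (by positivity)).1 (min_le_right _ _)
  obtain ⟨s, hs, hsmall⟩ := exists_forall_mul_rpow_le Kb hα
    (δ := min (abpConst n lam) (σ * abpConst n lam / 8)) (by positivity)
  refine ⟨σ, min (min s 1) d₀, σ * abpConst n lam / 4, hσ, by positivity, by positivity,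
    fun r hr hrle A F u hA hFA h x hx hx0 hxr hu => ?_⟩
  obtain ⟨⟨hrs, hr1⟩, hrd⟩ := by simpa only [le_min_iff] using hrle
  obtain ⟨hrκ, hrσ⟩ := le_min_iff.1 (hsmall r hr.le hrs)
  have hrα : r ^ α ≤ 1 := Real.rpow_le_one hr.le hr1 hα.le
  have herr : 2 * (F * r ^ α + 2 * A * (Kb * r ^ α)) ≤ σ * A * abpConst n lam :=
    calc 2 * (F * r ^ α + 2 * A * (Kb * r ^ α))
        ≤ 2 * (σ * abpConst n lam / 4 * A * 1 + 2 * A * (σ * abpConst n lam / 8)) := by gcongr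
      _ = σ * A * abpConst n lam := by ring
  obtain ⟨m, hxm, hmx⟩ := exists_mul_half_pow_near hx0 hxr
  have hbound := (hu.iterate hlam hLam (by positivity) hBlam hα hKb hσ.le hσα h hr hrd hrκ hA
    (flatProj_apply_self k x) (by linarith [norm_flatProj_le k x]) herr m) x
    (by rwa [norm_sub_flatProj hx0.le]) hx0
  have hqm : ((1 / 2 : ℝ) ^ α) ^ m ≤ 1 := pow_le_one₀ (by positivity) hq1.le
  calc A / 4 * x k = A / 2 * (1 + 0) * x k - 1 / 8 * A * 1 * (2 * x k) := by ring
    _ ≤ A / 2 * (1 + ((1 / 2) ^ α) ^ m) * x k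
        - σ * A * ((1 / 2) ^ α) ^ m * (r * (1 / 2) ^ m) := by
      gcongr
      · positivity
      · exact min_le_left _ _
    _ ≤ u x := hbound

/-- A quantitative Hopf lemma: a positive lower bound away from the flat boundary propagates to
linear growth at it. -/
theorem exists_mul_apply_le (k : Fin n) (hlam : 0 < lam) (hLam : lam ≤ Lam) (hα : 0 < α)
    (hKb : 0 ≤ Kb) (hd₀ : 0 < d₀) :
    ∃ h c C : ℝ, 0 < h ∧ h ≤ 1 / 8 ∧ 0 < c ∧ 0 < C ∧ ∀ (F : ℝ)
      (u : EuclideanSpace ℝ (Fin n) → ℝ), HalfBallSupersolution k lam Lam α Kb d₀ F u →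
      ∀ T, 0 ≤ T → (∀ y : EuclideanSpace ℝ (Fin n), ‖y‖ < 7 / 4 → h ≤ y k → T ≤ u y) →
      ∀ x ∈ upperHalfBall k 1, (c * T - C * F) * x k ≤ u x := by
  obtain ⟨σ, r₀, τ₁, hσ, hr₀, hτ₁, hgrow⟩ :=
    exists_mul_apply_le_of_linearLowerBound k hlam hLam hα hKb hd₀
  obtain ⟨H₀, τ₂, hH₀, hτ₂, hinit⟩ :=
    exists_linearLowerBound_of_le_above k hlam hLam hα hKb hd₀ hσ
  set H := min (min r₀ H₀) (1 / 4) with hHdef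
  have hH : 0 < H := by positivity
  obtain ⟨⟨hHr, hHH⟩, hH4⟩ : (H ≤ r₀ ∧ H ≤ H₀) ∧ H ≤ 1 / 4 := by
    simpa only [le_min_iff] using hHdef.le
  set τ := min τ₁ τ₂
  have hτ : 0 < τ := lt_min hτ₁ hτ₂
  refine ⟨H / 2, 1 / (8 * H + 1), 2 * H / ((8 * H + 1) * τ), by positivity, by linarith,
    by positivity, by positivity, fun F u h T hT hu x hx => ?_⟩
  have hux := h.nonneg ⟨hx.1.trans one_lt_two, hx.2⟩
  have hx1 : x k ≤ 1 := (apply_le_norm k x).trans hx.1.le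
  obtain ⟨A, rfl⟩ : ∃ A, T = 2 * A * H := ⟨T / (2 * H), by field_simp⟩
  have hA : 0 ≤ A := by nlinarith
  rcases lt_or_ge (τ * A) F with hFA | hFA
  · refine le_trans (mul_nonpos_of_nonpos_of_nonneg ?_ hx.2.le) hux
    calc 1 / (8 * H + 1) * (2 * A * H) - 2 * H / ((8 * H + 1) * τ) * F
        = 2 * H / ((8 * H + 1) * τ) * (τ * A - F) := by field_simp
      _ ≤ 0 := mul_nonpos_of_nonneg_of_nonpos (by positivity) (by linarith)
  · have hF : 0 ≤ 2 * H / ((8 * H + 1) * τ) * F := mul_nonneg (by positivity) h.rhs_nonneg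
    rcases lt_or_ge (x k) H with hxH | hxH
    · have hgrowth := hgrow H hH hHr A F u hA (hFA.trans (by gcongr; exact min_le_left _ _)) h x
        hx.1.le hx.2 hxH (hinit H hH hHH A F u hA (hFA.trans (by gcongr; exact min_le_right _ _)) h
          hu (flatProj k x) (flatProj_apply_self k x) ((norm_flatProj_le k x).trans hx.1.le))
      have hslope : 1 / (8 * H + 1) * (2 * A * H) ≤ A / 4 := by
        rw [one_div_mul_eq_div, div_le_iff₀ (by positivity)]
        linarith
      exact (mul_le_mul_of_nonneg_right (by linarith) hx.2.le).trans hgrowth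
    · have hslope : 1 / (8 * H + 1) * (2 * A * H) ≤ 2 * A * H := by
        rw [one_div_mul_eq_div]
        exact div_le_self (by positivity) (by linarith)
      calc (1 / (8 * H + 1) * (2 * A * H) - 2 * H / ((8 * H + 1) * τ) * F) * x k
          ≤ 2 * A * H * 1 := mul_le_mul (by linarith) hx1 hx.2.le hT
        _ ≤ u x := (mul_one _).trans_le (hu x (by linarith [hx.1]) (by linarith))

end BoundaryGrowth

section WeakHarnack

open Filter MeasureTheory Metric Set
open scoped ENNReal Topology

variable {n : ℕ} {k : Fin n} {lam Lam α Kb d₀ C r s t ε : ℝ} {x y : EuclideanSpace ℝ (Fin n)}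
  {u : EuclideanSpace ℝ (Fin n) → ℝ}

theorem lintegral_apply_rpow_neg_lt_top (k : Fin n) (R : ℝ) (hs : s < 1) :
    ∫⁻ y in upperHalfBall k R, ENNReal.ofReal (y k ^ (-s)) < ⊤ := by
  classical
  let g : Fin n → ℝ → ℝ := fun i => if i = k then (Ioc 0 R).indicator (fun v => v ^ (-s))
    else (Ioc (-R) R).indicator 1
  have hg (i : Fin n) : Integrable (g i) := by
    unfold g
    split_ifs
    · rw [integrable_indicator_iff measurableSet_Ioc]
      exact (intervalIntegral.intervalIntegrable_rpow' (by linarith)).1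
    · exact (integrable_indicator_iff measurableSet_Ioc).2 (integrableOn_const (by simp))
  have hprod := (PiLp.volume_preserving_ofLp (Fin n)).integrable_comp_of_integrable
    (Integrable.fintype_prod hg)
  refine lt_of_le_of_lt (le_trans ?_ (setLIntegral_le_lintegral (upperHalfBall k R) _))
    hprod.lintegral_lt_top
  refine setLIntegral_mono' (isOpen_upperHalfBall k R).measurableSet fun y hy =>
    ENNReal.ofReal_le_ofReal ?_
  have hgy (i : Fin n) : g i (y i) = if i = k then y k ^ (-s) else 1 := by
    have hyi := abs_lt.1 ((PiLp.norm_apply_le y i).trans_lt hy.1)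
    unfold g
    split_ifs with hik
    · subst hik
      exact indicator_of_mem (s := Ioc 0 R) ⟨hy.2, hyi.2.le⟩ _
    · exact indicator_of_mem (s := Ioc (-R) R) ⟨hyi.1, hyi.2.le⟩ _
  simp [Finset.prod_congr rfl fun i _ => hgy i]

/-- Combines the interior Harnack chains with the Hopf lemma: if `u / x_k` is small at one point of
the half-ball, then `u` cannot be large on a whole interior ball. -/
theorem exists_lt_of_exists_lt_mul (k : Fin n) (hlam : 0 < lam) (hLam : lam ≤ Lam) (hα : 0 < α)
    (hKb : 0 ≤ Kb) (hd₀ : 0 < d₀) :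
    ∃ κ₀ : ℝ, 0 < κ₀ ∧ κ₀ ≤ 1 / 512 ∧ ∀ κ, 0 < κ → κ ≤ κ₀ → ∃ (m : ℕ) (C : ℝ), 0 < C ∧
      ∀ (F : ℝ) (u : EuclideanSpace ℝ (Fin n) → ℝ), HalfBallSupersolution k lam Lam α Kb d₀ F u →
      ∀ J, 0 < J → F ≤ J → (∃ y ∈ upperHalfBall k 1, u y < J * y k) →
      ∀ x ∈ upperHalfBall k (3 / 2), ∀ t, C * J ≤ t * x k ^ m →
        ∃ w ∈ ball x (κ * x k), u w < t := by
  obtain ⟨κ₀, C₁, hκ₀, hκ₀1, hC₁, hchain⟩ := exists_pow_mul_sub_le k Kb hlam hLam hα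
  obtain ⟨h, c₂, C₂, hh, hh8, hc₂, hC₂, hhopf⟩ := exists_mul_apply_le k hlam hLam hα hKb hd₀
  refine ⟨κ₀, hκ₀, hκ₀1, fun κ hκ hκκ₀ => ?_⟩
  obtain ⟨m, hchain⟩ := hchain κ hκ hκκ₀
  obtain ⟨c, hc, hchain⟩ := hchain h hh hh8
  refine ⟨m, (1 + C₂ + c₂ * C₁) / (c * c₂), by positivity, fun F u hu J hJ hFJ ⟨y, hy, hyJ⟩ x hx t
    ht => ?_⟩
  by_contra! hge
  have hpow : 0 < x k ^ m := pow_pos hx.2 m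
  have ht0 : 0 < t := pos_of_mul_pos_left (lt_of_lt_of_le (by positivity) ht) hpow.le
  rw [div_mul_eq_mul_div, div_le_iff₀ (by positivity)] at ht
  set T := c * x k ^ m * t - C₁ * F with hT
  have hJT : J + C₂ * J ≤ c₂ * T := by
    rw [hT]
    linarith [mul_le_mul_of_nonneg_left hFJ (mul_nonneg hc₂.le hC₁.le)]
  have hT0 : 0 ≤ T := nonneg_of_mul_nonneg_right (le_trans (by positivity) hJT) hc₂
  have hlow := hhopf F u hu T hT0 (hchain d₀ F u hu x t hx.1 hx.2 ht0.le hge) y hy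
  have hlt := lt_of_mul_lt_mul_right (hlow.trans_lt hyJ) hy.2.le
  linarith [mul_le_mul_of_nonneg_left hFJ hC₂.le]

theorem apply_mem_Icc_of_mem_ball (hr : r ≤ x k / 2) (hy : y ∈ ball x r) :
    y k ∈ Icc (x k / 2) (2 * x k) := by
  have hyx := abs_le.1 (abs_apply_sub_apply_le_dist k y x)
  have hyr := mem_ball.1 hy
  exact ⟨by linarith, by linarith⟩

theorem lintegral_ball_div_apply_rpow_le (hx : 0 < x k) (hε : 0 ≤ ε) (hr : r ≤ x k / 2)
    (hu : ∀ y ∈ ball x r, 0 ≤ u y) :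
    ∫⁻ y in ball x r, ENNReal.ofReal ((u y / y k) ^ ε) ≤
      ENNReal.ofReal ((2 / x k) ^ ε) * ∫⁻ y in ball x r, ENNReal.ofReal (u y ^ ε) := by
  rw [← lintegral_const_mul' _ _ ENNReal.ofReal_ne_top]
  refine setLIntegral_mono' measurableSet_ball fun y hy => ?_
  obtain ⟨hyx, -⟩ := apply_mem_Icc_of_mem_ball hr hy
  have hy0 : 0 < y k := (half_pos hx).trans_le hyx
  have huy := hu y hy
  rw [← ENNReal.ofReal_mul (by positivity), ← Real.mul_rpow (by positivity) huy]
  gcongr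
  calc u y / y k ≤ u y / (x k / 2) := by gcongr
    _ = 2 / x k * u y := by field_simp

theorem rpow_neg_mul_volume_le_lintegral (hx : 0 < x k) (hs : 0 ≤ s) (hs1 : s ≤ 1)
    (hr : r < x k / 2) :
    ENNReal.ofReal (x k ^ (-s)) * volume (closedBall x r) ≤
      ENNReal.ofReal 2 * ∫⁻ y in closedBall x r, ENNReal.ofReal (y k ^ (-s)) := by
  rw [← lintegral_const_mul' _ _ ENNReal.ofReal_ne_top, ← setLIntegral_const]
  refine setLIntegral_mono' measurableSet_closedBall fun y hy => ?_
  obtain ⟨hyx, hyx'⟩ := apply_mem_Icc_of_mem_ball le_rfl (closedBall_subset_ball hr hy)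
  have hy0 : 0 < y k := (half_pos hx).trans_le hyx
  have h2s : (2 : ℝ) ^ s ≤ 2 := Real.rpow_le_self_of_one_le one_le_two hs1
  rw [← ENNReal.ofReal_mul zero_le_two]
  refine ENNReal.ofReal_le_ofReal ?_
  calc x k ^ (-s) = 2 ^ s * (2 * x k) ^ (-s) := by
        rw [Real.mul_rpow zero_le_two hx.le, ← mul_assoc, ← Real.rpow_add two_pos, add_neg_cancel,
          Real.rpow_zero, one_mul]
    _ ≤ 2 * y k ^ (-s) :=
        mul_le_mul h2s (Real.rpow_le_rpow_of_nonpos hy0 hyx' (neg_nonpos.2 hs)) (by positivity)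
          zero_le_two

theorem lintegral_closedBall_div_apply_rpow_le (hr : 0 < r) (hrx : 8 * r ≤ x k / 2) (hε : 0 ≤ ε)
    (hs : 0 ≤ s) (hs1 : s ≤ 1) (hu : ∀ y ∈ ball x (8 * r), 0 ≤ u y) (ht : 0 ≤ t) (hC : 0 ≤ C)
    (hlocal : ∫⁻ y in ball x (8 * r), ENNReal.ofReal (u y ^ ε) ≤
      ENNReal.ofReal (C * t ^ ε) * volume (ball x (8 * r))) :
    ∫⁻ y in closedBall x (4 * r), ENNReal.ofReal ((u y / y k) ^ ε) ≤
      ENNReal.ofReal (C * 8 ^ n * 2 * ((2 / x k * t) ^ ε * x k ^ s)) *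
        ∫⁻ y in closedBall x r, ENNReal.ofReal (y k ^ (-s)) := by
  have : NeZero n := .of_pos k.pos
  have hx : 0 < x k := by linarith
  have hvol : volume (ball x (8 * r)) = ENNReal.ofReal (8 ^ n) * volume (closedBall x r) := by
    rw [Measure.addHaar_closedBall_eq_addHaar_ball, volume_ball_eq x (by positivity),
      volume_ball_eq x hr.le, ← ENNReal.ofReal_mul (by positivity), mul_pow, mul_assoc]
  calc ∫⁻ y in closedBall x (4 * r), ENNReal.ofReal ((u y / y k) ^ ε)
      ≤ ∫⁻ y in ball x (8 * r), ENNReal.ofReal ((u y / y k) ^ ε) :=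
        lintegral_mono_set (closedBall_subset_ball (by linarith))
    _ ≤ ENNReal.ofReal ((2 / x k) ^ ε) * (ENNReal.ofReal (C * t ^ ε) *
          (ENNReal.ofReal (8 ^ n) * volume (closedBall x r))) := by
        rw [← hvol]
        exact (lintegral_ball_div_apply_rpow_le hx hε hrx hu).trans (by gcongr)
    _ = ENNReal.ofReal (C * 8 ^ n * ((2 / x k * t) ^ ε * x k ^ s)) *
          (ENNReal.ofReal (x k ^ (-s)) * volume (closedBall x r)) := by
        simp only [← mul_assoc]
        rw [← ENNReal.ofReal_mul (by positivity), ← ENNReal.ofReal_mul (by positivity),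
          ← ENNReal.ofReal_mul (by positivity), Real.mul_rpow (by positivity) ht,
          Real.rpow_neg hx.le]
        congr 2
        field_simp
    _ ≤ ENNReal.ofReal (C * 8 ^ n * ((2 / x k * t) ^ ε * x k ^ s)) *
          (ENNReal.ofReal 2 * ∫⁻ y in closedBall x r, ENNReal.ofReal (y k ^ (-s))) :=
        mul_le_mul' le_rfl (rpow_neg_mul_volume_le_lintegral hx hs hs1 (by linarith))
    _ = _ := by
        rw [← mul_assoc, ← ENNReal.ofReal_mul (by positivity), mul_right_comm _ _ (2 : ℝ)]

theorem exists_lintegral_ball_rpow_le (k : Fin n) (hlam : 0 < lam) (hLam : lam ≤ Lam)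
    (hα : 0 < α) (hKb : 0 ≤ Kb) (hd₀ : 0 < d₀) :
    ∃ (κ C₁ C₂ ε₀ : ℝ) (m : ℕ), 0 < κ ∧ κ ≤ 1 / 512 ∧ 0 < C₁ ∧ 0 < C₂ ∧ 0 < ε₀ ∧
      ∀ (F : ℝ) (u : EuclideanSpace ℝ (Fin n) → ℝ), HalfBallSupersolution k lam Lam α Kb d₀ F u →
      ∀ J, 0 < J → F ≤ J → (∃ y ∈ upperHalfBall k 1, u y < J * y k) →
      ∀ x ∈ upperHalfBall k (3 / 2), ∀ ε, 0 < ε → ε ≤ ε₀ →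
        ∫⁻ y in ball x (8 * (κ * x k)), ENNReal.ofReal (u y ^ ε) ≤
          ENNReal.ofReal (C₁ * (C₂ * J / x k ^ m) ^ ε) * volume (ball x (8 * (κ * x k))) := by
  have : NeZero n := .of_pos k.pos
  obtain ⟨ε₀, δ, C₁, hε₀, hδ, hC₁, hinterior⟩ := exists_lintegral_rpow_le n hlam hLam
  obtain ⟨κ₀, hκ₀, hκ₀1, hpoint⟩ := exists_lt_of_exists_lt_mul k hlam hLam hα hKb hd₀
  obtain ⟨r₀, hr₀, hsmall⟩ := exists_forall_mul_rpow_le Kb hα hδ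
  obtain ⟨κ, hκ, hκκ₀, hκr₀⟩ : ∃ κ, 0 < κ ∧ κ ≤ κ₀ ∧ 108 * κ ≤ r₀ :=
    ⟨min κ₀ (r₀ / 108), by positivity, min_le_left _ _,
      (le_div_iff₀' (by norm_num)).1 (min_le_right _ _)⟩
  obtain ⟨m, C, hC, hpoint⟩ := hpoint κ hκ hκκ₀
  obtain ⟨C₂, hC₂, hCC₂, hδC₂⟩ : ∃ C₂, 0 < C₂ ∧ C ≤ C₂ ∧ 8 * κ * 2 ^ (m + 1) ≤ δ * C₂ :=
    ⟨max C (8 * κ * 2 ^ (m + 1) / δ), by positivity, le_max_left _ _,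
      (div_le_iff₀' hδ).1 (le_max_right _ _)⟩
  refine ⟨κ, C₁, C₂, ε₀, m, hκ, hκκ₀.trans hκ₀1, hC₁, hC₂, hε₀, fun F u hu J hJ hFJ hy x hx ε hε
    hεε₀ => ?_⟩
  have hx0 : 0 < x k := hx.2
  have hx1 : ‖x‖ < 3 / 2 := hx.1
  have hx2 := apply_le_norm k x
  have hκx : κ * x k ≤ 1 / 512 * x k := mul_le_mul_of_nonneg_right (hκκ₀.trans hκ₀1) hx0.le
  have hr0 : 9 * (8 * (κ * x k)) ≤ r₀ := by nlinarith
  set t := C₂ * J / x k ^ m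
  have htx : t * x k ^ m = C₂ * J := div_mul_cancel₀ _ (by positivity)
  obtain ⟨w, hw, hwt⟩ := hpoint F u hu J hJ hFJ hy x hx t (by rw [htx]; gcongr)
  have hFt : F ≤ δ * t / (8 * (κ * x k)) := by
    refine hFJ.trans ((le_div_iff₀ (by positivity)).2 (le_of_mul_le_mul_right ?_
      (by positivity : 0 < x k ^ m)))
    calc J * (8 * (κ * x k)) * x k ^ m = J * (8 * κ * x k ^ (m + 1)) := by ring
      _ ≤ J * (8 * κ * 2 ^ (m + 1)) := by gcongr; linarith
      _ ≤ J * (δ * C₂) := by gcongr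
      _ = δ * t * x k ^ m := by rw [mul_assoc δ, htx]; ring
  have hsol := hu.isSupersolution (ball x (9 * (8 * (κ * x k)))) x (9 * (8 * (κ * x k)))
    isOpen_ball (ball_subset_upperHalfBall (by linarith) (by linarith)) (by positivity) subset_rfl
  exact hinterior u x (8 * (κ * x k)) t (by positivity) (by positivity)
    (hsol.mono isOpen_ball subset_rfl (hsmall _ (by positivity) hr0) hFt)
    w (ball_subset_ball (by linarith [mul_pos hκ hx0]) hw) hwt.le ε hε hεε₀

/-- The polynomial loss in `x_k` from the chains is turned, for small `ε`, into an integrable power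
`y_k ^ (-s)` with `s < 1`. -/
theorem exists_lintegral_closedBall_le (k : Fin n) (hlam : 0 < lam) (hLam : lam ≤ Lam)
    (hα : 0 < α) (hKb : 0 ≤ Kb) (hd₀ : 0 < d₀) :
    ∃ κ C ε s : ℝ, 0 < κ ∧ κ ≤ 1 / 512 ∧ 0 < C ∧ 0 < ε ∧ s < 1 ∧
      ∀ (F : ℝ) (u : EuclideanSpace ℝ (Fin n) → ℝ), HalfBallSupersolution k lam Lam α Kb d₀ F u →
      ∀ J, 0 < J → F ≤ J → (∃ y ∈ upperHalfBall k 1, u y < J * y k) →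
      ∀ x ∈ upperHalfBall k (3 / 2),
        ∫⁻ y in closedBall x (4 * (κ * x k)), ENNReal.ofReal ((u y / y k) ^ ε) ≤
          ENNReal.ofReal (C * J ^ ε) *
            ∫⁻ y in closedBall x (κ * x k), ENNReal.ofReal (y k ^ (-s)) := by
  obtain ⟨κ, C₁, C₂, ε₀, m, hκ, hκ1, hC₁, hC₂, hε₀, hlocal⟩ :=
    exists_lintegral_ball_rpow_le k hlam hLam hα hKb hd₀
  set ε := min ε₀ (1 / (2 * (m + 1 : ℝ)))
  have hε : 0 < ε := by positivity
  have hεm : (m + 1 : ℝ) * ε ≤ 1 / 2 := by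
    linarith [(le_div_iff₀' (by positivity)).1 (min_le_right ε₀ (1 / (2 * (m + 1 : ℝ))))]
  refine ⟨κ, C₁ * 8 ^ n * 2 * (2 * C₂) ^ ε, ε, (m + 1) * ε, hκ, hκ1, by positivity, hε,
    by linarith, fun F u hu J hJ hFJ hy x hx => ?_⟩
  have hx0 : 0 < x k := hx.2
  have hx1 : ‖x‖ < 3 / 2 := hx.1
  have hx2 := apply_le_norm k x
  have hκx : κ * x k ≤ 1 / 512 * x k := mul_le_mul_of_nonneg_right hκ1 hx0.le
  have hsub : ball x (8 * (κ * x k)) ⊆ upperHalfBall k 2 :=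
    ball_subset_upperHalfBall (by linarith) (by linarith)
  have hscale : (2 / x k * (C₂ * J / x k ^ m)) ^ ε * x k ^ ((m + 1) * ε) =
      (2 * C₂) ^ ε * J ^ ε := by
    rw [Real.rpow_mul hx0.le, ← Real.mul_rpow (by positivity) (by positivity),
      ← Real.mul_rpow (by positivity) hJ.le, Real.rpow_add_one hx0.ne', Real.rpow_natCast]
    congr 1
    field_simp
  refine (lintegral_closedBall_div_apply_rpow_le (s := (m + 1) * ε) (by positivity) (by linarith)
    hε.le (by positivity) (by linarith) (fun y hy => hu.nonneg (hsub hy)) (by positivity) hC₁.le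
    (hlocal F u hu J hJ hFJ hy x hx ε hε (min_le_left _ _))).trans_eq ?_
  rw [hscale, ← mul_assoc]

end WeakHarnack

section BoundaryWeakHarnack

open Filter MeasureTheory Metric Set
open scoped ENNReal Topology

variable {n : ℕ} {k : Fin n} {lam Lam α Kb d₀ p q K L κ : ℝ} {b f u : EuclideanSpace ℝ (Fin n) → ℝ}

theorem lintegral_upperHalfBall_le {φ ψ : EuclideanSpace ℝ (Fin n) → ℝ≥0∞} {M : ℝ≥0∞} (hκ : 0 < κ)
    (hκ4 : κ ≤ 1 / 4)
    (h : ∀ x ∈ upperHalfBall k (3 / 2),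
      ∫⁻ y in closedBall x (4 * (κ * x k)), φ y ≤ M * ∫⁻ y in closedBall x (κ * x k), ψ y) :
    ∫⁻ y in upperHalfBall k (3 / 2), φ y ≤ M * ∫⁻ y in upperHalfBall k 2, ψ y := by
  have hsmall (x) (hx : x ∈ upperHalfBall k (3 / 2)) :
      0 < x k ∧ ‖x‖ < 3 / 2 ∧ x k ≤ ‖x‖ ∧ κ * x k ≤ 1 / 4 * x k :=
    ⟨hx.2, hx.1, apply_le_norm k x, mul_le_mul_of_nonneg_right hκ4 hx.2.le⟩
  obtain ⟨U, hU, hUc, hdisj, hcov⟩ := exists_countable_disjoint_closedBall_cover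
    (upperHalfBall k (3 / 2)) id (fun x => κ * x k) 1 (fun x hx => mul_pos hκ hx.2)
    (fun x hx => by linarith [hsmall x hx]) fun x hx => mem_closedBall_self (mul_pos hκ hx.2).le
  have : Countable U := hUc.to_subtype
  calc ∫⁻ y in upperHalfBall k (3 / 2), φ y
      ≤ ∫⁻ y in ⋃ x : U, closedBall x.1 (4 * (κ * x.1 k)), φ y :=
        lintegral_mono_set (by rwa [biUnion_eq_iUnion] at hcov)
    _ ≤ ∑' x : U, ∫⁻ y in closedBall x.1 (4 * (κ * x.1 k)), φ y := lintegral_iUnion_le _ _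
    _ ≤ ∑' x : U, M * ∫⁻ y in closedBall x.1 (κ * x.1 k), ψ y :=
        ENNReal.tsum_le_tsum fun x => h x.1 (hU x.2)
    _ = M * ∫⁻ y in ⋃ x : U, closedBall x.1 (κ * x.1 k), ψ y := by
        rw [ENNReal.tsum_mul_left, lintegral_iUnion (fun _ => measurableSet_closedBall)]
        exact fun x y hxy => hdisj x.2 y.2 (Subtype.coe_injective.ne hxy)
    _ ≤ M * ∫⁻ y in upperHalfBall k 2, ψ y := by
        refine mul_le_mul' le_rfl (lintegral_mono_set (iUnion_subset fun x => ?_))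
        obtain ⟨hx0, hx1, hx2, hκx⟩ := hsmall x.1 (hU x.2)
        exact (closedBall_subset_ball (by linarith : κ * x.1 k < x.1 k / 3)).trans
          (ball_subset_upperHalfBall (by linarith) (by linarith))

theorem exists_lintegral_rpow_le_of_exists_lt (k : Fin n) (hlam : 0 < lam) (hLam : lam ≤ Lam)
    (hα : 0 < α) (hKb : 0 ≤ Kb) (hd₀ : 0 < d₀) :
    ∃ C ε : ℝ, 0 < C ∧ 0 < ε ∧
      ∀ (F : ℝ) (u : EuclideanSpace ℝ (Fin n) → ℝ), HalfBallSupersolution k lam Lam α Kb d₀ F u →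
      ∀ J, 0 < J → F ≤ J → (∃ y ∈ upperHalfBall k 1, u y < J * y k) →
        (∫⁻ y in upperHalfBall k (3 / 2), ENNReal.ofReal ((u y / y k) ^ ε)) ^ (1 / ε) ≤
          ENNReal.ofReal (C * J) := by
  obtain ⟨κ, C, ε, s, hκ, hκ1, hC, hε, hs, hlocal⟩ :=
    exists_lintegral_closedBall_le k hlam hLam hα hKb hd₀
  obtain ⟨I, hI, hfin⟩ : ∃ I : ℝ, 0 < I ∧
      ∫⁻ y in upperHalfBall k 2, ENNReal.ofReal (y k ^ (-s)) ≤ ENNReal.ofReal I :=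
    ⟨_, ENNReal.toReal_nonneg.trans_lt (lt_add_one _),
      (ENNReal.le_ofReal_iff_toReal_le (lintegral_apply_rpow_neg_lt_top k 2 hs).ne
        (by positivity)).2 (lt_add_one _).le⟩
  refine ⟨(C * I) ^ (1 / ε), ε, by positivity, hε, fun F u hu J hJ hFJ hy => ?_⟩
  calc (∫⁻ y in upperHalfBall k (3 / 2), ENNReal.ofReal ((u y / y k) ^ ε)) ^ (1 / ε)
      ≤ (ENNReal.ofReal (C * J ^ ε) * ENNReal.ofReal I) ^ (1 / ε) := by
        gcongr
        exact (lintegral_upperHalfBall_le hκ (by linarith) (hlocal F u hu J hJ hFJ hy)).trans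
          (mul_le_mul' le_rfl hfin)
    _ = ENNReal.ofReal ((C * I) ^ (1 / ε) * J) := by
        rw [← ENNReal.ofReal_mul (by positivity), mul_right_comm,
          ENNReal.ofReal_rpow_of_nonneg (by positivity) (by positivity),
          Real.mul_rpow (by positivity) (by positivity), one_div, Real.rpow_rpow_inv hJ.le hε.ne']

theorem exists_lintegral_rpow_le_iInf_add (k : Fin n) (hlam : 0 < lam) (hLam : lam ≤ Lam)
    (hα : 0 < α) (hKb : 0 ≤ Kb) (hd₀ : 0 < d₀) :
    ∃ C ε : ℝ, 0 < C ∧ 0 < ε ∧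
      ∀ (F : ℝ) (u : EuclideanSpace ℝ (Fin n) → ℝ), HalfBallSupersolution k lam Lam α Kb d₀ F u →
        (∫⁻ y in upperHalfBall k (3 / 2), ENNReal.ofReal ((u y / y k) ^ ε)) ^ (1 / ε) ≤
          ENNReal.ofReal (C * ((⨅ x : upperHalfBall k 1, u x.1 / x.1 k) + F)) := by
  obtain ⟨C, ε, hC, hε, hbound⟩ := exists_lintegral_rpow_le_of_exists_lt k hlam hLam hα hKb hd₀
  refine ⟨C, ε, hC, hε, fun F u hu => ?_⟩
  set I := ⨅ x : upperHalfBall k 1, u x.1 / x.1 k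
  have hF := hu.rhs_nonneg
  have hI : 0 ≤ I := Real.iInf_nonneg fun x =>
    div_nonneg (hu.nonneg ⟨x.2.1.trans one_lt_two, x.2.2⟩) x.2.2.le
  have : Nonempty (upperHalfBall k 1) :=
    ⟨EuclideanSpace.single k (1 / 2), by norm_num [upperHalfBall]⟩
  have hlim : Tendsto (fun J => ENNReal.ofReal (C * J)) (𝓝[>] (I + F))
      (𝓝 (ENNReal.ofReal (C * (I + F)))) :=
    ((ENNReal.continuous_ofReal.comp (continuous_const_mul C)).tendsto _).mono_left
      nhdsWithin_le_nhds
  refine ge_of_tendsto hlim (eventually_nhdsWithin_of_forall fun J hJ => ?_)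
  have hIJ : I + F < J := hJ
  obtain ⟨y, hy⟩ := exists_lt_of_ciInf_lt (show I < J by linarith)
  exact hbound F u hu J (by linarith) (by linarith) ⟨y.1, y.2, (div_lt_iff₀ y.2.2).1 hy⟩

theorem halfBallSupersolution_of_pucciMinus_le (hq : n ≤ q) (hp : n ≤ p) (hK : 0 ≤ K) (hL : 0 ≤ L)
    (hb : ContinuousOn b (upperHalfBall k 2)) (hf : ContinuousOn f (upperHalfBall k 2))
    (hb0 : ∀ x ∈ upperHalfBall k 2, 0 ≤ b x)
    (hbK : LpNormE n q b (upperHalfBall k 2) ≤ ENNReal.ofReal K)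
    (hfp : LpNormE n p f (upperHalfBall k 2) ≤ ENNReal.ofReal L)
    (hfq : LpNormE n q f {x ∈ upperHalfBall k 2 | x k < d₀} ≤ ENNReal.ofReal L)
    (hu : ContDiffOn ℝ 2 u (upperHalfBall k 2)) (hu0 : ∀ x ∈ upperHalfBall k 2, 0 ≤ u x)
    (heq : ∀ x ∈ upperHalfBall k 2,
      pucciMinus n lam Lam (hess n u x) - b x * gradNorm n u x ≤ f x) :
    HalfBallSupersolution k lam Lam (1 - n / q) (K * unitBallVolume n ^ (1 / n - 1 / q)) d₀
      ((unitBallVolume n ^ (1 / n - 1 / p) * 2 ^ (1 - n / p) + unitBallVolume n ^ (1 / n - 1 / q)) *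
        L) u := by
  have hn : n ≠ 0 := k.pos.ne'
  have hω := unitBallVolume_pos n
  have haem {g : EuclideanSpace ℝ (Fin n) → ℝ} {D} (hg : ContinuousOn g (upperHalfBall k 2))
      (hD : D ⊆ upperHalfBall k 2) : AEMeasurable g (volume.restrict D) :=
    (hg.aemeasurable (isOpen_upperHalfBall k 2).measurableSet).mono_measure
      (Measure.restrict_mono hD le_rfl)
  have hsol {D z r γ} (hDo : IsOpen D) (hD : D ⊆ upperHalfBall k 2) (hr : 0 ≤ r)
      (hDr : D ⊆ ball z r) (hfγ : LnBound f D γ) :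
      IsSupersolution lam Lam (K * unitBallVolume n ^ (1 / n - 1 / q) * r ^ (1 - n / q)) γ D u :=
    ⟨hDo, hu.mono hD, fun x hx => hu0 x (hD hx), b, f, hb.mono hD, hf.mono hD,
      fun x hx => hb0 x (hD hx), lnBound_of_LpNormE_le hn hq hD (haem hb hD) hK hbK hr hDr, hfγ,
      fun x hx => heq x (hD hx)⟩
  refine ⟨by positivity, fun D z r hDo hD hr hDr => hsol hDo hD hr hDr ?_,
    fun D z r hDo hD hDd hr hDr => hsol hDo hD hr hDr ?_⟩
  · refine (lnBound_of_LpNormE_le (z := 0) hn hp hD (haem hf hD) hL hfp zero_le_two fun x hx =>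
      mem_ball_zero_iff.2 (hD hx).1).mono subset_rfl ?_
    rw [mul_comm _ L, mul_assoc L]
    gcongr
    exact le_add_of_nonneg_right (by positivity)
  · refine (lnBound_of_LpNormE_le hn hq (D := {x ∈ upperHalfBall k 2 | x k < d₀})
      (fun x hx => ⟨hD hx, hDd x hx⟩) (haem hf hD) hL hfq hr
      hDr).mono subset_rfl ?_
    rw [mul_comm _ L]
    gcongr
    exact le_add_of_nonneg_left (by positivity)

theorem boundary_weak_harnack_inequality_general (n : ℕ) (hn : 1 ≤ n) (lam Lam : ℝ)
    (hlam : 0 < lam) (hLam : lam ≤ Lam) (p q d0 K : ℝ) (hq : (n : ℝ) < q) (hp : (n : ℝ) ≤ p)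
    (hd0 : 0 < d0) (hK : 0 ≤ K) :
    ∃ ε c C : ℝ, 0 < ε ∧ 0 < c ∧ 0 < C ∧
      ∀ b f u : EuclideanSpace ℝ (Fin n) → ℝ,
        ContinuousOn b (halfBall n hn 2) →
        ContinuousOn f (halfBall n hn 2) →
        (∀ x ∈ halfBall n hn 2, 0 ≤ b x) →
        LpNormE n q b (halfBall n hn 2) ≤ ENNReal.ofReal K →
        ContDiffOn ℝ 2 u (halfBall n hn 2) →
        (∀ x ∈ halfBall n hn 2, 0 ≤ u x) →
        (∀ x ∈ halfBall n hn 2,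
          pucciMinus n lam Lam (hess n u x) - b x * gradNorm n u x ≤ f x) →
        ENNReal.ofReal c *
            (∫⁻ x in halfBall n hn (3 / 2),
              ENNReal.ofReal ((u x / lastC n hn x) ^ ε)) ^ (1 / ε)
          ≤ ENNReal.ofReal (⨅ x : halfBall n hn 1, u x.1 / lastC n hn x.1)
            + ENNReal.ofReal C * LpqNormHB n hn p q d0 2 (fun x => max (f x) 0) := by
  have hω := unitBallVolume_pos n
  have hα : 0 < 1 - n / q := sub_pos.2 ((div_lt_one (n.cast_nonneg.trans_lt hq)).2 hq)
  obtain ⟨C₁, ε, hC₁, hε, hbound⟩ := exists_lintegral_rpow_le_iInf_add (⟨n - 1, by omega⟩ : Fin n)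
    hlam hLam hα (by positivity : 0 ≤ K * unitBallVolume n ^ (1 / n - 1 / q)) hd0
  set C₂ := unitBallVolume n ^ (1 / n - 1 / p) * 2 ^ (1 - n / p) +
    unitBallVolume n ^ (1 / n - 1 / q)
  have hC₂ : 0 < C₂ := by positivity
  refine ⟨ε, C₁⁻¹, C₂, hε, inv_pos.2 hC₁, hC₂, fun b f u hb hf hb0 hbK hu hu0 heq => ?_⟩
  set N := LpqNormHB n hn p q d0 2 (fun x => max (f x) 0)
  obtain hN | hN := eq_or_ne N ⊤
  · rw [hN, ENNReal.mul_top (ENNReal.ofReal_pos.2 hC₂).ne', add_top]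
    exact le_top
  have hsol := halfBallSupersolution_of_pucciMinus_le (k := ⟨n - 1, by omega⟩) (L := N.toReal) hq.le
    hp hK ENNReal.toReal_nonneg hb (hf.sup continuousOn_const) hb0 hbK
    ((le_add_right le_rfl).trans (ENNReal.ofReal_toReal hN).ge)
    ((le_add_left le_rfl).trans (ENNReal.ofReal_toReal hN).ge) hu hu0
    fun x hx => (heq x hx).trans (le_max_left _ _)
  set I := ⨅ x : halfBall n hn 1, u x.1 / lastC n hn x.1
  have hI : 0 ≤ I := Real.iInf_nonneg fun x =>
    div_nonneg (hu0 x ⟨x.2.1.trans one_lt_two, x.2.2⟩) x.2.2.le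
  calc _ ≤ ENNReal.ofReal C₁⁻¹ * ENNReal.ofReal (C₁ * (I + C₂ * N.toReal)) :=
        mul_le_mul' le_rfl (hbound _ u hsol)
    _ = ENNReal.ofReal I + ENNReal.ofReal C₂ * N := by
        rw [← ENNReal.ofReal_mul (by positivity), inv_mul_cancel_left₀ hC₁.ne',
          ENNReal.ofReal_add hI hsol.rhs_nonneg, ENNReal.ofReal_mul hC₂.le,
          ENNReal.ofReal_toReal hN]

end BoundaryWeakHarnack

/-- Boundary weak Harnack inequality in half-balls. -/
theorem boundary_weak_harnack_inequality
    (n : ℕ) (hn : 2 ≤ n) (lam Lam : ℝ) (hlam : 0 < lam) (hLam : lam ≤ Lam)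
    (p q d0 K : ℝ) (hq : (n : ℝ) < q) (hp : (n : ℝ) ≤ p) (hpq : p ≤ q)
    (hd0 : 0 < d0) (hd0' : d0 ≤ 1 / 4) (hK : 0 < K) :
    ∃ ε c C : ℝ, 0 < ε ∧ 0 < c ∧ 0 < C ∧
      ∀ b f u : EuclideanSpace ℝ (Fin n) → ℝ,
        ContinuousOn b (halfBall n (by omega) 2) →
        ContinuousOn f (halfBall n (by omega) 2) →
        (∀ x ∈ halfBall n (by omega) 2, 0 ≤ b x) →
        LpNormE n q b (halfBall n (by omega) 2) ≤ ENNReal.ofReal K →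
        ContDiffOn ℝ 2 u (halfBall n (by omega) 2) →
        (∀ x ∈ halfBall n (by omega) 2, 0 ≤ u x) →
        (∀ x ∈ halfBall n (by omega) 2,
          pucciMinus n lam Lam (hess n u x) - b x * gradNorm n u x ≤ f x) →
        ENNReal.ofReal c *
            (∫⁻ x in halfBall n (by omega) (3 / 2),
              ENNReal.ofReal ((u x / lastC n (by omega) x) ^ ε)) ^ (1 / ε)
          ≤ ENNReal.ofReal (⨅ x : halfBall n (by omega : 1 ≤ n) 1, u x.1 / lastC n (by omega) x.1)
            + ENNReal.ofReal C * LpqNormHB n (by omega) p q d0 2 (fun x => max (f x) 0) :=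
  boundary_weak_harnack_inequality_general n (by omega) lam Lam hlam hLam p q d0 K hq hp hd0 hK.le
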